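/- arXiv:1002.4736 — 2 statements merged into one kernel-verified Lean document; each statement's English description precedes it below -/
import Mathlib

section
/- Let a, b be Schwartz functions on ℝ^d. If a ∈ Ḣ^{(d-1)/2}(ℝ^d) ∩ Ḣ^s(ℝ^d) and b ∈ L^∞(ℝ^d) ∩ Ḣ^{s+1/2}(ℝ^d) for some s > 0, then the product ab belongs to Ḣ^s(ℝ^d) and ‖ab‖_{Ḣ^s} ≤ C (‖a‖_{Ḣ^{(d-1)/2}} ‖b‖_{Ḣ^{s+1/2}} + ‖a‖_{Ḣ^s} ‖b‖_{L^∞}) for a constant C depending only on d and s. -/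
open MeasureTheory Real
open scoped FourierTransform ENNReal

noncomputable section

/-- `ℝ^d` as a Euclidean space. -/
abbrev E (d : ℕ) := EuclideanSpace ℝ (Fin d)

/-- Homogeneous Sobolev norm `‖f‖_{Ḣ^s(ℝ^d)} = (∫ |ξ|^{2s} |𝓕f(ξ)|² dξ)^{1/2}`. -/
noncomputable def hNorm (d : ℕ) (s : ℝ) (f : E d → ℂ) : ℝ :=
  (∫ ξ : E d, ‖ξ‖ ^ (2 * s) * ‖𝓕 f ξ‖ ^ 2) ^ (1/2 : ℝ)

/-!
On the Fourier side the product is the convolution `(𝓕 b * 𝓕 a)(ξ) = ∫ 𝓕 b(η) 𝓕 a(ξ - η) dη`, and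
the frequencies `η` of `b` are split according to whether they are much smaller than `ξ`.

If `|η| ≪ |ξ| ~ 2^j`, then `|ξ - η| ~ 2^j` as well, so only the part of `a` in finitely many dyadic
shells matters. On each shell the weight `|ξ|^s` is essentially constant, and by Plancherel the
convolution costs the supremum of the low-pass filtered `b`, which is `≲ ‖b‖_{L^∞}` uniformly in
`j`. Summing over the boundedly overlapping shells gives `‖a‖_{Ḣ^s} ‖b‖_{L^∞}`.

If `|η| ≳ |ξ|`, then also `|η| ≳ |ξ| + |ξ - η|`. In dimension `n`, Cauchy–Schwarz with the weights
of `Ḣ^{s+σ}` for `b` and of `Ḣ^{n/2-σ}` for `a` leaves the kernel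
`∫ (|ξ| + |ζ|)^{-2(s+σ)} |ζ|^{2σ-n} dζ = c |ξ|^{-2s}`, which is finite because `0 < 2σ < 2(s + σ)`
and cancels the weight of `Ḣ^s` exactly. The classical law is the case `σ = 1/2`.
-/

section ProductLaw

open Module (finrank)
open Set Filter
open scoped SchwartzMap Convolution Topology NNReal

section MeasureTheory

variable {X : Type*} [MeasurableSpace X] {μ : Measure X}

lemma sq_lintegral_le_of_sq_le_mul {f g h : X → ℝ≥0∞} (hg : AEMeasurable g μ)
    (hh : AEMeasurable h μ) (hfgh : ∀ᵐ x ∂μ, f x ^ 2 ≤ g x * h x) :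
    (∫⁻ x, f x ∂μ) ^ 2 ≤ (∫⁻ x, g x ∂μ) * ∫⁻ x, h x ∂μ := by
  have sqrt_sq (t : ℝ≥0∞) : (t ^ (1 / 2 : ℝ)) ^ 2 = t := by
    rw [← ENNReal.rpow_mul_natCast]; norm_num
  have hf : ∀ᵐ x ∂μ, f x ≤ g x ^ (1 / 2 : ℝ) * h x ^ (1 / 2 : ℝ) := by
    filter_upwards [hfgh] with x hx
    rwa [← ENNReal.pow_le_pow_left_iff two_ne_zero, mul_pow, sqrt_sq, sqrt_sq]
  calc (∫⁻ x, f x ∂μ) ^ 2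
      ≤ ((∫⁻ x, g x ∂μ) ^ (1 / 2 : ℝ) * (∫⁻ x, h x ∂μ) ^ (1 / 2 : ℝ)) ^ 2 := by
        gcongr
        exact (lintegral_mono_ae hf).trans <|
          ENNReal.lintegral_mul_norm_pow_le hg hh (by norm_num) (by norm_num) (by norm_num)
    _ = _ := by rw [mul_pow, sqrt_sq, sqrt_sq]

lemma lintegral_lintegral_mul_sub {G : Type*} [AddGroup G] [MeasurableSpace G] [MeasurableAdd₂ G]
    [MeasurableNeg G] {ν : Measure G} [SFinite ν] [ν.IsAddRightInvariant] {f g : G → ℝ≥0∞}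
    (hf : Measurable f) (hg : Measurable g) :
    ∫⁻ x, ∫⁻ y, f y * g (x - y) ∂ν ∂ν = (∫⁻ y, f y ∂ν) * ∫⁻ x, g x ∂ν := by
  rw [lintegral_lintegral_swap (by fun_prop)]
  have inner_eq (y : G) : ∫⁻ x, f y * g (x - y) ∂ν = f y * ∫⁻ x, g x ∂ν := by
    rw [lintegral_const_mul _ (by fun_prop), lintegral_sub_right_eq_self g]
  simp_rw [inner_eq]
  rw [lintegral_mul_const _ hf]

lemma lintegral_comp_smul {W : Type*} [NormedAddCommGroup W] [NormedSpace ℝ W]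
    [FiniteDimensional ℝ W] [MeasurableSpace W] [BorelSpace W] (ν : Measure W)
    [ν.IsAddHaarMeasure] (f : W → ℝ≥0∞) {c : ℝ} (hc : c ≠ 0) :
    ∫⁻ x, f (c • x) ∂ν = ENNReal.ofReal |(c ^ finrank ℝ W)⁻¹| * ∫⁻ x, f x ∂ν := by
  have hmap := (Homeomorph.smulOfNeZero c hc).measurableEmbedding.lintegral_map (μ := ν) f
  have hscale : ν.map (Homeomorph.smulOfNeZero c hc) = ENNReal.ofReal |(c ^ finrank ℝ W)⁻¹| • ν :=
    Measure.map_addHaar_smul ν hc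
  rw [hscale, lintegral_smul_measure, smul_eq_mul] at hmap
  exact hmap.symm

lemma enorm_convolution_le {W : Type*} [NormedAddCommGroup W] [MeasurableSpace W]
    {ν : Measure W} (f g : W → ℂ) {M : ℝ≥0∞} (hf : AEMeasurable f ν)
    (hg : ∀ x, ‖g x‖ₑ ≤ M) (x : W) :
    ‖(f ⋆[ContinuousLinearMap.mul ℂ ℂ, ν] g) x‖ₑ ≤ (∫⁻ y, ‖f y‖ₑ ∂ν) * M := by
  rw [convolution_def, ← lintegral_mul_const'' _ hf.enorm]
  refine (enorm_integral_le_lintegral_enorm _).trans (lintegral_mono fun y => ?_)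
  rw [ContinuousLinearMap.mul_apply', enorm_mul]
  gcongr
  exact hg _

end MeasureTheory

section DyadicAnnuli

variable {V : Type*} [NormedAddCommGroup V]

variable (V) in
/-- The annulus `2 ^ i ≤ |ξ| < 2 ^ j`. -/
def dyadicAnnulus (i j : ℤ) : Set V :=
  norm ⁻¹' Ico ((2 : ℝ) ^ i) (2 ^ j)

lemma disjoint_dyadicAnnulus_dyadicAnnulus (i j k : ℤ) :
    Disjoint (dyadicAnnulus V i j) (dyadicAnnulus V j k) :=
  Ico_disjoint_Ico_same.preimage norm

lemma dyadicAnnulus_union_dyadicAnnulus {i j k : ℤ} (hij : i ≤ j) (hjk : j ≤ k) :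
    dyadicAnnulus V i j ∪ dyadicAnnulus V j k = dyadicAnnulus V i k := by
  rw [dyadicAnnulus, dyadicAnnulus, ← preimage_union,
    Ico_union_Ico_eq_Ico (zpow_le_zpow_right₀ one_le_two hij) (zpow_le_zpow_right₀ one_le_two hjk),
    dyadicAnnulus]

variable [MeasurableSpace V] [OpensMeasurableSpace V] {μ : Measure V}

lemma measurableSet_dyadicAnnulus (i j : ℤ) : MeasurableSet (dyadicAnnulus V i j) :=
  measurable_norm measurableSet_Ico

lemma tsum_setLIntegral_dyadicAnnulus_succ [NullSingletonClass μ] (f : V → ℝ≥0∞) :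
    ∑' j : ℤ, ∫⁻ ξ in dyadicAnnulus V j (j + 1), f ξ ∂μ = ∫⁻ ξ, f ξ ∂μ := by
  have hdisj : Pairwise (Function.onFun Disjoint fun j : ℤ => dyadicAnnulus V j (j + 1)) :=
    fun _ _ hij => ((zpow_right_mono₀ one_le_two).pairwise_disjoint_on_Ico_succ hij).preimage norm
  have hcover : ∀ᵐ ξ ∂μ, ξ ∈ ⋃ j : ℤ, dyadicAnnulus V j (j + 1) := by
    filter_upwards [Measure.ae_ne μ (0 : V)] with ξ hξ
    exact mem_iUnion.mpr (exists_mem_Ico_zpow (norm_pos_iff.mpr hξ) one_lt_two)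
  rw [← lintegral_iUnion (fun j => measurableSet_dyadicAnnulus j (j + 1)) hdisj,
    Measure.restrict_eq_self_of_ae_mem hcover]

lemma tsum_setLIntegral_dyadicAnnulus [NullSingletonClass μ] (f : V → ℝ≥0∞) (N : ℕ) :
    ∑' j : ℤ, ∫⁻ ξ in dyadicAnnulus V j (j + N), f ξ ∂μ = N * ∫⁻ ξ, f ξ ∂μ := by
  induction N with
  | zero => simp [dyadicAnnulus]
  | succ N ih =>
    have hsplit (j : ℤ) : ∫⁻ ξ in dyadicAnnulus V j (j + (N + 1 : ℕ)), f ξ ∂μ =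
        (∫⁻ ξ in dyadicAnnulus V j (j + N), f ξ ∂μ) +
          ∫⁻ ξ in dyadicAnnulus V (j + N) (j + N + 1), f ξ ∂μ := by
      rw [← lintegral_union (measurableSet_dyadicAnnulus _ _)
        (disjoint_dyadicAnnulus_dyadicAnnulus _ _ _),
        dyadicAnnulus_union_dyadicAnnulus (by lia) (by lia), Nat.cast_succ, add_assoc]
    have hshift : ∑' j : ℤ, ∫⁻ ξ in dyadicAnnulus V (j + N) (j + N + 1), f ξ ∂μ = ∫⁻ ξ, f ξ ∂μ :=
      ((Equiv.addRight (N : ℤ)).tsum_eq fun j => ∫⁻ ξ in dyadicAnnulus V j (j + 1), f ξ ∂μ).trans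
        (tsum_setLIntegral_dyadicAnnulus_succ f)
    simp_rw [hsplit]
    rw [ENNReal.tsum_add, ih, hshift, Nat.cast_succ, add_mul, one_mul]

end DyadicAnnuli

section FrequencyCutoffs

variable {V : Type*} [NormedAddCommGroup V] [NormedSpace ℝ V] [FiniteDimensional ℝ V]

/-- The bump function from which the frequency cutoff `lowPass` at scale `2 ^ j` is made. -/
def dyadicBump (j : ℤ) : ContDiffBump (0 : V) where
  rIn := 2 ^ j
  rOut := 2 ^ (j + 1)
  rIn_pos := by positivity
  rIn_lt_rOut := zpow_lt_zpow_right₀ one_lt_two (lt_add_one j)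

variable (V) in
/-- The smooth cutoff to frequencies `|ξ| ≲ 2 ^ j`: it is `1` for `|ξ| ≤ 2 ^ j` and `0` for
`|ξ| ≥ 2 ^ (j + 1)`. -/
def lowPass (j : ℤ) : 𝓢(V, ℂ) :=
  ((dyadicBump (V := V) j).hasCompactSupport.comp_left Complex.ofReal_zero).toSchwartzMap
    (Complex.ofRealCLM.contDiff.comp (dyadicBump j).contDiff)

lemma lowPass_apply (j : ℤ) (ξ : V) :
    lowPass V j ξ = ((dyadicBump j : ContDiffBump (0 : V)) ξ : ℝ) := rfl

lemma lowPass_eq_one {j : ℤ} {ξ : V} (hξ : ‖ξ‖ ≤ 2 ^ j) : lowPass V j ξ = 1 := by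
  rw [lowPass_apply, (dyadicBump j).one_of_mem_closedBall (mem_closedBall_zero_iff.mpr hξ),
    Complex.ofReal_one]

lemma lowPass_eq_zero {j : ℤ} {ξ : V} (hξ : 2 ^ (j + 1) ≤ ‖ξ‖) : lowPass V j ξ = 0 := by
  rw [lowPass_apply, (dyadicBump j).zero_of_le_dist (by rwa [dist_zero_right]),
    Complex.ofReal_zero]

lemma enorm_one_sub_lowPass_le_one (j : ℤ) (ξ : V) : ‖1 - lowPass V j ξ‖ₑ ≤ 1 := by
  rw [← ofReal_norm, ENNReal.ofReal_le_one, lowPass_apply, ← Complex.ofReal_one,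
    ← Complex.ofReal_sub, Complex.norm_real]
  exact abs_sub_le_of_nonneg_of_le zero_le_one le_rfl (dyadicBump j).nonneg (dyadicBump j).le_one

lemma lowPass_eq_lowPass_zero_smul (j : ℤ) (ξ : V) :
    lowPass V j ξ = lowPass V 0 (((2 : ℝ) ^ j)⁻¹ • ξ) := by
  simp [lowPass_apply, ContDiffBump.apply, dyadicBump, zpow_add₀,
    mul_div_cancel_left₀ (2 : ℝ) (zpow_ne_zero j two_ne_zero)]

variable (V) in
/-- The smooth cutoff to frequencies `2 ^ i ≲ |ξ| ≲ 2 ^ j`. -/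
def bandPass (i j : ℤ) : 𝓢(V, ℂ) :=
  lowPass V j - lowPass V i

lemma bandPass_apply (i j : ℤ) (ξ : V) : bandPass V i j ξ = lowPass V j ξ - lowPass V i ξ := rfl

lemma bandPass_eq_one {i j : ℤ} {ξ : V} (hi : 2 ^ (i + 1) ≤ ‖ξ‖) (hj : ‖ξ‖ ≤ 2 ^ j) :
    bandPass V i j ξ = 1 := by
  rw [bandPass_apply, lowPass_eq_one hj, lowPass_eq_zero hi, sub_zero]

lemma bandPass_eq_zero {i j : ℤ} (hij : i ≤ j) {ξ : V} (hξ : ξ ∉ dyadicAnnulus V i (j + 1)) :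
    bandPass V i j ξ = 0 := by
  rw [bandPass_apply]
  rcases lt_or_ge ‖ξ‖ (2 ^ i) with hlow | hlow
  · have hj : ‖ξ‖ ≤ 2 ^ j := hlow.le.trans (zpow_le_zpow_right₀ one_le_two hij)
    rw [lowPass_eq_one hj, lowPass_eq_one hlow.le, sub_self]
  · have hhigh : 2 ^ (j + 1) ≤ ‖ξ‖ := not_lt.mp fun h => hξ ⟨hlow, h⟩
    have hi : 2 ^ (i + 1) ≤ ‖ξ‖ := (zpow_le_zpow_right₀ one_le_two (by lia)).trans hhigh
    rw [lowPass_eq_zero hhigh, lowPass_eq_zero hi, sub_self]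

lemma enorm_bandPass_le_one (i j : ℤ) (ξ : V) : ‖bandPass V i j ξ‖ₑ ≤ 1 := by
  rw [← ofReal_norm, ENNReal.ofReal_le_one, bandPass_apply, lowPass_apply, lowPass_apply,
    ← Complex.ofReal_sub, Complex.norm_real]
  exact abs_sub_le_of_nonneg_of_le (dyadicBump j).nonneg (dyadicBump j).le_one
    (dyadicBump i).nonneg (dyadicBump i).le_one

end FrequencyCutoffs

variable {V : Type*} [NormedAddCommGroup V] [InnerProductSpace ℝ V] [FiniteDimensional ℝ V]
  [MeasurableSpace V] [BorelSpace V]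

section Fourier

/-- The pointwise product of two Schwartz functions, as a Schwartz function. -/
abbrev schwartzMul (f g : 𝓢(V, ℂ)) : 𝓢(V, ℂ) :=
  SchwartzMap.pairing (ContinuousLinearMap.mul ℂ ℂ) f g

/-- The convolution of two Schwartz functions, as a Schwartz function. -/
abbrev schwartzConv (f g : 𝓢(V, ℂ)) : 𝓢(V, ℂ) :=
  SchwartzMap.convolution (ContinuousLinearMap.mul ℂ ℂ) f g

lemma schwartzConv_apply (f g : 𝓢(V, ℂ)) (x : V) :
    schwartzConv f g x = ∫ y, f y * g (x - y) :=
  SchwartzMap.convolution_apply _ f g x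

lemma fourier_fourier_apply {F : Type*} [NormedAddCommGroup F] [NormedSpace ℂ F] [CompleteSpace F]
    (f : 𝓢(V, F)) (x : V) : 𝓕 (𝓕 f) x = f (-x) := by
  have h : 𝓕⁻ (𝓕 f) (-x) = f (-x) := by rw [FourierTransform.fourierInv_fourier_eq]
  rw [← h, SchwartzMap.fourierInv_apply_eq]
  simp

lemma fourierInv_schwartzMul (f g : 𝓢(V, ℂ)) :
    𝓕⁻ (schwartzMul f g) = schwartzConv (𝓕⁻ f) (𝓕⁻ g) := by
  have h := SchwartzMap.fourier_convolution (.mul ℂ ℂ) (𝓕⁻ f) (𝓕⁻ g)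
  simpa using (congrArg (𝓕⁻ ·) h).symm

lemma fourier_schwartzMul (f g : 𝓢(V, ℂ)) :
    𝓕 (schwartzMul f g) = schwartzConv (𝓕 f) (𝓕 g) := by
  have h : 𝓕 (𝓕 (schwartzMul f g)) = 𝓕 (schwartzConv (𝓕 f) (𝓕 g)) := by
    ext x
    simp only [SchwartzMap.fourier_convolution, SchwartzMap.pairing_apply_apply,
      fourier_fourier_apply]
  simpa using congrArg (𝓕⁻ ·) h

lemma lintegral_enorm_sq_fourier {H : Type*} [NormedAddCommGroup H] [InnerProductSpace ℂ H]
    [CompleteSpace H] (f : 𝓢(V, H)) :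
    ∫⁻ ξ, ‖𝓕 f ξ‖ₑ ^ 2 = ∫⁻ x, ‖f x‖ₑ ^ 2 := by
  have toReal (g : 𝓢(V, H)) : ∫⁻ x, ‖g x‖ₑ ^ 2 = ENNReal.ofReal (∫ x, ‖g x‖ ^ 2) := by
    rw [ofReal_integral_eq_lintegral_ofReal ((g.memLp 2 volume).integrable_norm_pow two_ne_zero)
      (.of_forall fun x => sq_nonneg _)]
    simp only [ENNReal.ofReal_pow (norm_nonneg _), ofReal_norm]
  rw [toReal, toReal, SchwartzMap.integral_norm_sq_fourier]

lemma lintegral_enorm_sq_schwartzConv_le (u v : 𝓢(V, ℂ)) {M : ℝ≥0∞}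
    (hM : ∀ x, ‖𝓕⁻ u x‖ₑ ≤ M) :
    ∫⁻ ξ, ‖schwartzConv u v ξ‖ₑ ^ 2 ≤ M ^ 2 * ∫⁻ ξ, ‖v ξ‖ₑ ^ 2 := by
  have hconv : schwartzConv u v = 𝓕 (schwartzMul (𝓕⁻ u) (𝓕⁻ v)) := by
    simp [fourier_schwartzMul]
  have hv : ∫⁻ ξ, ‖v ξ‖ₑ ^ 2 = ∫⁻ x, ‖𝓕⁻ v x‖ₑ ^ 2 := by
    rw [← lintegral_enorm_sq_fourier (𝓕⁻ v), FourierTransform.fourier_fourierInv_eq]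
  have hmeas : Measurable fun x => ‖𝓕⁻ v x‖ₑ ^ 2 :=
    (𝓕⁻ v).continuous.measurable.enorm.pow_const 2
  rw [hconv, hv, lintegral_enorm_sq_fourier, ← lintegral_const_mul _ hmeas]
  gcongr with x
  rw [SchwartzMap.pairing_apply_apply, ContinuousLinearMap.mul_apply', enorm_mul, mul_pow]
  gcongr
  exact hM x

lemma fourierInv_comp_smul {F : Type*} [NormedAddCommGroup F] [NormedSpace ℂ F] (g : V → F)
    {c : ℝ} (hc : c ≠ 0) (x : V) :
    𝓕⁻ (fun ξ => g (c • ξ)) x = |(c ^ finrank ℝ V)⁻¹| • 𝓕⁻ g (c⁻¹ • x) := by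
  have h := Measure.integral_comp_smul (volume : Measure V)
    (fun ξ => Real.fourierChar (inner ℝ ξ (c⁻¹ • x)) • g ξ) c
  rw [Real.fourierInv_eq, Real.fourierInv_eq, ← h]
  simp only [inner_smul_left, inner_smul_right, conj_trivial, inv_mul_cancel_left₀ hc]

lemma lintegral_enorm_fourierInv_comp_smul {F : Type*} [NormedAddCommGroup F] [NormedSpace ℂ F]
    (g : V → F) {c : ℝ} (hc : c ≠ 0) :
    ∫⁻ x, ‖𝓕⁻ (fun ξ => g (c • ξ)) x‖ₑ = ∫⁻ x, ‖𝓕⁻ g x‖ₑ := by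
  simp_rw [fourierInv_comp_smul g hc, enorm_smul]
  rw [lintegral_const_mul' _ _ enorm_ne_top,
    lintegral_comp_smul volume (fun x => ‖𝓕⁻ g x‖ₑ) (inv_ne_zero hc), ← mul_assoc, enorm_abs,
    ← ofReal_norm, norm_eq_abs, ← ENNReal.ofReal_mul (abs_nonneg _), ← abs_mul]
  simp [hc]

variable (V) in
/-- The `L¹` norm of the convolution kernel of `lowPass V 0`. It bounds the `L^∞` operator norm of
each Fourier multiplier `lowPass V j`, because dilations preserve the `L¹` norm of the kernel. -/
def lowPassNorm : ℝ≥0∞ :=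
  ∫⁻ x, ‖𝓕⁻ (lowPass V 0) x‖ₑ

lemma lowPassNorm_ne_top : lowPassNorm V ≠ ∞ :=
  (𝓕⁻ (lowPass V 0)).integrable.hasFiniteIntegral.ne

lemma lintegral_enorm_fourierInv_lowPass (j : ℤ) :
    ∫⁻ x, ‖𝓕⁻ (lowPass V j) x‖ₑ = lowPassNorm V := by
  have hscale : ⇑(lowPass V j) = fun ξ => lowPass V 0 (((2 : ℝ) ^ j)⁻¹ • ξ) :=
    funext (lowPass_eq_lowPass_zero_smul j)
  simp only [lowPassNorm, SchwartzMap.fourierInv_coe, hscale]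
  exact lintegral_enorm_fourierInv_comp_smul _ (inv_ne_zero (zpow_ne_zero _ two_ne_zero))

lemma enorm_fourierInv_lowPass_mul_fourier_le (j : ℤ) (b : 𝓢(V, ℂ)) {M : ℝ≥0∞}
    (hb : ∀ x, ‖b x‖ₑ ≤ M) (x : V) :
    ‖𝓕⁻ (schwartzMul (lowPass V j) (𝓕 b)) x‖ₑ ≤ lowPassNorm V * M := by
  rw [fourierInv_schwartzMul, FourierTransform.fourierInv_fourier_eq,
    ← lintegral_enorm_fourierInv_lowPass j, schwartzConv_apply]
  exact enorm_convolution_le _ b (𝓕⁻ (lowPass V j)).continuous.aemeasurable hb x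

end Fourier

section SobolevEnergy

/-- The homogeneous Sobolev norm `‖f‖_{Ḣ^s}` on a finite-dimensional Euclidean space. As the Bochner
integral of a non-integrable function is `0`, it is meaningful only for `f ∈ Ḣ^s`. -/
def homogeneousSobolevNorm (s : ℝ) (f : V → ℂ) : ℝ :=
  (∫ ξ : V, ‖ξ‖ ^ (2 * s) * ‖𝓕 f ξ‖ ^ 2) ^ (1 / 2 : ℝ)

lemma homogeneousSobolevNorm_nonneg (s : ℝ) (f : V → ℂ) : 0 ≤ homogeneousSobolevNorm s f :=
  rpow_nonneg (integral_nonneg fun _ => by positivity) _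

/-- The integrand `|ξ|^{2s} |g(ξ)|²` of the squared `Ḣ^s` norm, on the Fourier side: `g` is the
Fourier transform of the function being measured. -/
def sobolevDensity (s : ℝ) (g : V → ℂ) (ξ : V) : ℝ≥0∞ :=
  ENNReal.ofReal (‖ξ‖ ^ (2 * s)) * ‖g ξ‖ₑ ^ 2

/-- The squared `Ḣ^s` norm of the inverse Fourier transform of `g`, with value `∞` when that
function is not in `Ḣ^s`. -/
def sobolevEnergy (s : ℝ) (g : V → ℂ) : ℝ≥0∞ :=
  ∫⁻ ξ, sobolevDensity s g ξ

omit [InnerProductSpace ℝ V] [FiniteDimensional ℝ V] in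
lemma measurable_sobolevDensity (s : ℝ) {g : V → ℂ} (hg : Measurable g) :
    Measurable (sobolevDensity s g) := by
  unfold sobolevDensity
  fun_prop

lemma integrable_rpow_norm_mul_norm_sq (f : 𝓢(V, ℂ)) {p : ℝ} (hp : 0 ≤ p) :
    Integrable (fun ξ : V => ‖ξ‖ ^ p * ‖f ξ‖ ^ 2) := by
  have hpow : Integrable (fun ξ : V => (1 + ‖ξ‖ ^ ⌈p⌉₊) * ‖f ξ‖) := by
    simp only [add_mul, one_mul]
    exact f.integrable.norm.add (f.integrable_pow_mul volume ⌈p⌉₊)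
  refine (hpow.mul_const (SchwartzMap.seminorm ℝ 0 0 f)).mono' (by fun_prop)
    (.of_forall fun ξ => ?_)
  have hrpow : ‖ξ‖ ^ p ≤ 1 + ‖ξ‖ ^ ⌈p⌉₊ := by
    rcases le_total ‖ξ‖ 1 with h | h
    · exact (rpow_le_one (norm_nonneg ξ) h hp).trans (by simp)
    · calc ‖ξ‖ ^ p ≤ ‖ξ‖ ^ (⌈p⌉₊ : ℝ) := rpow_le_rpow_of_exponent_le h (Nat.le_ceil p)
        _ ≤ 1 + ‖ξ‖ ^ ⌈p⌉₊ := by rw [rpow_natCast]; linarith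
  rw [norm_of_nonneg (by positivity), sq, ← mul_assoc]
  gcongr
  exact SchwartzMap.norm_le_seminorm ℝ f ξ

lemma integrable_rpow_norm_mul_norm_sq_fourier (f : 𝓢(V, ℂ)) {s : ℝ} (hs : 0 ≤ s) :
    Integrable (fun ξ : V => ‖ξ‖ ^ (2 * s) * ‖𝓕 ⇑f ξ‖ ^ 2) := by
  rw [← SchwartzMap.fourier_coe]
  exact integrable_rpow_norm_mul_norm_sq (𝓕 f) (by positivity)

lemma ofReal_homogeneousSobolevNorm_sq {s : ℝ} {f : V → ℂ}
    (hf : Integrable (fun ξ : V => ‖ξ‖ ^ (2 * s) * ‖𝓕 f ξ‖ ^ 2)) :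
    ENNReal.ofReal (homogeneousSobolevNorm s f) ^ 2 = sobolevEnergy s (𝓕 f) := by
  have hnonneg : ∀ ξ : V, 0 ≤ ‖ξ‖ ^ (2 * s) * ‖𝓕 f ξ‖ ^ 2 := fun ξ => by positivity
  rw [homogeneousSobolevNorm, ← sqrt_eq_rpow, ← ENNReal.ofReal_pow (sqrt_nonneg _),
    sq_sqrt (integral_nonneg hnonneg), ofReal_integral_eq_lintegral_ofReal hf (.of_forall hnonneg)]
  refine lintegral_congr fun ξ => ?_
  rw [sobolevDensity, ENNReal.ofReal_mul (by positivity), ENNReal.ofReal_pow (norm_nonneg _),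
    ofReal_norm]

end SobolevEnergy

section LowFrequencies

lemma schwartzConv_lowPass_mul_apply (β α : 𝓢(V, ℂ)) {j : ℤ} {ξ : V}
    (hξ : ξ ∈ dyadicAnnulus V j (j + 1)) :
    schwartzConv (schwartzMul (lowPass V (j - 2)) β) α ξ =
      schwartzConv (schwartzMul (lowPass V (j - 2)) β)
        (schwartzMul (bandPass V (j - 2) (j + 2)) α) ξ := by
  simp only [schwartzConv_apply, SchwartzMap.pairing_apply_apply, ContinuousLinearMap.mul_apply']
  refine integral_congr_ae (.of_forall fun η => ?_)
  rcases le_or_gt (2 ^ (j - 2 + 1)) ‖η‖ with hη | hη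
  · simp only [lowPass_eq_zero hη, zero_mul]
  · have hj : (2 : ℝ) ^ j = 2 * 2 ^ (j - 2 + 1) := by rw [← zpow_one_add₀ two_ne_zero]; congr 1; lia
    have hj1 : (2 : ℝ) ^ (j + 1) = 2 * 2 ^ j := by rw [zpow_add_one₀ two_ne_zero, mul_comm]
    have hj2 : (2 : ℝ) ^ (j + 2) = 2 * 2 ^ (j + 1) := by
      rw [← zpow_one_add₀ two_ne_zero]; congr 1; lia
    have hlower : 2 ^ (j - 2 + 1) ≤ ‖ξ - η‖ := by linarith [hξ.1, norm_sub_norm_le ξ η]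
    have hupper : ‖ξ - η‖ ≤ 2 ^ (j + 2) := by linarith [hξ.2, norm_sub_le ξ η]
    simp only [bandPass_eq_one hlower hupper, one_mul]

omit [MeasurableSpace V] [BorelSpace V] in
lemma rpow_mul_enorm_sq_bandPass_mul_le {s : ℝ} (hs : 0 ≤ s) {i j : ℤ} (hij : i ≤ j) (k : ℤ)
    (α : V → ℂ) (ζ : V) :
    ENNReal.ofReal (((2 : ℝ) ^ k) ^ (2 * s)) * ‖bandPass V i j ζ * α ζ‖ₑ ^ 2 ≤
      ENNReal.ofReal (((2 : ℝ) ^ (k - i)) ^ (2 * s)) *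
        (dyadicAnnulus V i (j + 1)).indicator (sobolevDensity s α) ζ := by
  by_cases hζ : ζ ∈ dyadicAnnulus V i (j + 1)
  · have hscale : (2 : ℝ) ^ k ≤ 2 ^ (k - i) * ‖ζ‖ := by
      calc (2 : ℝ) ^ k = 2 ^ (k - i) * 2 ^ i := by rw [← zpow_add₀ two_ne_zero, sub_add_cancel]
        _ ≤ 2 ^ (k - i) * ‖ζ‖ := by gcongr; exact hζ.1
    have hband : ‖bandPass V i j ζ * α ζ‖ₑ ≤ ‖α ζ‖ₑ := by
      rw [enorm_mul]
      exact mul_le_of_le_one_left' (enorm_bandPass_le_one i j ζ)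
    rw [indicator_of_mem hζ, sobolevDensity, ← mul_assoc, ← ENNReal.ofReal_mul (by positivity),
      ← mul_rpow (by positivity) (norm_nonneg ζ)]
    gcongr
  · rw [bandPass_eq_zero hij hζ]
    simp

lemma setLIntegral_sobolevDensity_schwartzConv_lowPass_le {s : ℝ} (hs : 0 ≤ s) (α b : 𝓢(V, ℂ))
    {M : ℝ≥0∞} (hb : ∀ x, ‖b x‖ₑ ≤ M) (j : ℤ) :
    ∫⁻ ξ in dyadicAnnulus V j (j + 1),
        sobolevDensity s (schwartzConv (schwartzMul (lowPass V (j - 2)) (𝓕 b)) α) ξ ≤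
      (lowPassNorm V * M) ^ 2 * (ENNReal.ofReal (8 ^ (2 * s)) *
        ∫⁻ ζ in dyadicAnnulus V (j - 2) (j + 3), sobolevDensity s α ζ) := by
  set u := schwartzMul (lowPass V (j - 2)) (𝓕 b)
  set v := schwartzMul (bandPass V (j - 2) (j + 2)) α
  set w := ENNReal.ofReal (((2 : ℝ) ^ (j + 1)) ^ (2 * s))
  have hshell (ξ : V) (hξ : ξ ∈ dyadicAnnulus V j (j + 1)) :
      sobolevDensity s (schwartzConv u α) ξ ≤ w * ‖schwartzConv u v ξ‖ₑ ^ 2 := by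
    rw [sobolevDensity, schwartzConv_lowPass_mul_apply _ _ hξ]
    have hnorm : ‖ξ‖ ≤ 2 ^ (j + 1) := hξ.2.le
    gcongr ?_ * _
    exact ENNReal.ofReal_le_ofReal (by gcongr)
  have hv (ζ : V) : w * ‖v ζ‖ₑ ^ 2 ≤ ENNReal.ofReal (8 ^ (2 * s)) *
      (dyadicAnnulus V (j - 2) (j + 3)).indicator (sobolevDensity s α) ζ := by
    have hratio : (8 : ℝ) = 2 ^ (j + 1 - (j - 2)) := by
      rw [show j + 1 - (j - 2) = 3 by ring]; norm_num
    rw [hratio, show j + 3 = j + 2 + 1 by ring]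
    exact rpow_mul_enorm_sq_bandPass_mul_le hs (by lia) (j + 1) α ζ
  calc ∫⁻ ξ in dyadicAnnulus V j (j + 1), sobolevDensity s (schwartzConv u α) ξ
      ≤ ∫⁻ ξ in dyadicAnnulus V j (j + 1), w * ‖schwartzConv u v ξ‖ₑ ^ 2 :=
        setLIntegral_mono' (measurableSet_dyadicAnnulus _ _) hshell
    _ ≤ w * ∫⁻ ξ, ‖schwartzConv u v ξ‖ₑ ^ 2 := by
        rw [← lintegral_const_mul' _ _ ENNReal.ofReal_ne_top]
        exact setLIntegral_le_lintegral _ _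
    _ ≤ w * ((lowPassNorm V * M) ^ 2 * ∫⁻ ζ, ‖v ζ‖ₑ ^ 2) := by
        gcongr
        exact lintegral_enorm_sq_schwartzConv_le u v
          (enorm_fourierInv_lowPass_mul_fourier_le (j - 2) b hb)
    _ = (lowPassNorm V * M) ^ 2 * ∫⁻ ζ, w * ‖v ζ‖ₑ ^ 2 := by
        rw [lintegral_const_mul' _ _ ENNReal.ofReal_ne_top, mul_left_comm]
    _ ≤ _ := by
        rw [← lintegral_indicator (measurableSet_dyadicAnnulus _ _),
          ← lintegral_const_mul' _ _ ENNReal.ofReal_ne_top]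
        exact mul_le_mul_right (lintegral_mono hv) _

lemma tsum_setLIntegral_sobolevDensity_schwartzConv_lowPass_le [Nontrivial V] {s : ℝ} (hs : 0 ≤ s)
    (α b : 𝓢(V, ℂ)) {M : ℝ≥0∞} (hb : ∀ x, ‖b x‖ₑ ≤ M) :
    ∑' j : ℤ, ∫⁻ ξ in dyadicAnnulus V j (j + 1),
        sobolevDensity s (schwartzConv (schwartzMul (lowPass V (j - 2)) (𝓕 b)) α) ξ ≤
      (lowPassNorm V * M) ^ 2 * (ENNReal.ofReal (8 ^ (2 * s)) * (5 * sobolevEnergy s α)) := by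
  have hoverlap : ∑' j : ℤ, ∫⁻ ζ in dyadicAnnulus V (j - 2) (j + 3), sobolevDensity s α ζ =
      5 * sobolevEnergy s α := by
    have hfive (j : ℤ) : j + 3 = j - 2 + (5 : ℕ) := by lia
    simp_rw [hfive]
    exact ((Equiv.subRight (2 : ℤ)).tsum_eq fun j =>
      ∫⁻ ζ in dyadicAnnulus V j (j + (5 : ℕ)), sobolevDensity s α ζ).trans
      (tsum_setLIntegral_dyadicAnnulus _ 5)
  refine (ENNReal.tsum_le_tsum fun j =>
    setLIntegral_sobolevDensity_schwartzConv_lowPass_le hs α b hb j).trans_eq ?_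
  rw [ENNReal.tsum_mul_left, ENNReal.tsum_mul_left, hoverlap]

end LowFrequencies

section HighFrequencies

lemma integrable_one_add_norm_rpow_mul_norm_rpow [Nontrivial V] {p q : ℝ} (hq : 0 < q)
    (hqp : q < p) :
    Integrable (fun ζ : V => (1 + ‖ζ‖) ^ (-p) * ‖ζ‖ ^ (q - finrank ℝ V)) := by
  have hmellin : IntegrableOn (fun y : ℝ => y ^ (q - 1) * (1 + y) ^ (-p)) (Ioi 0) := by
    refine mellin_convergent_of_isBigO_scalar (a := p) (b := 0) ?_ ?_ hqp ?_ hq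
    · refine ContinuousOn.locallyIntegrableOn (fun y hy => ?_) measurableSet_Ioi
      have hy : 1 + y ≠ 0 := by linarith [mem_Ioi.mp hy]
      exact ((by fun_prop : ContinuousAt (fun y : ℝ => 1 + y) y).rpow_const
        (.inl hy)).continuousWithinAt
    · refine .of_bound 1 ?_
      filter_upwards [eventually_gt_atTop 0] with y hy
      rw [one_mul, norm_of_nonneg (by positivity), norm_of_nonneg (by positivity)]
      exact rpow_le_rpow_of_nonpos hy (by linarith) (by linarith)
    · refine .of_bound 1 ?_
      filter_upwards [self_mem_nhdsWithin] with y hy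
      have hy : 0 < y := hy
      rw [norm_of_nonneg (by positivity), neg_zero, rpow_zero, norm_one, mul_one]
      exact rpow_le_one_of_one_le_of_nonpos (by linarith) (by linarith)
  rw [integrable_fun_norm_addHaar volume
    (f := fun y : ℝ => (1 + y) ^ (-p) * y ^ (q - finrank ℝ V))]
  refine hmellin.congr_fun (fun y (hy : 0 < y) => ?_) measurableSet_Ioi
  have hpow : y ^ (q - 1) = y ^ (finrank ℝ V - 1) * y ^ (q - finrank ℝ V) := by
    rw [← rpow_natCast, ← rpow_add hy, Nat.cast_sub Module.finrank_pos]
    congr 1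
    push_cast
    ring
  simp only [hpow, smul_eq_mul]
  ring

lemma lintegral_add_norm_rpow_mul_norm_rpow {ρ : ℝ} (hρ : 0 < ρ) (p q : ℝ) :
    ∫⁻ ζ : V, ENNReal.ofReal ((ρ + ‖ζ‖) ^ (-p) * ‖ζ‖ ^ (q - finrank ℝ V)) =
      ENNReal.ofReal (ρ ^ (q - p)) *
        ∫⁻ ζ : V, ENNReal.ofReal ((1 + ‖ζ‖) ^ (-p) * ‖ζ‖ ^ (q - finrank ℝ V)) := by
  have hscale (ζ : V) : ENNReal.ofReal ((ρ + ‖ζ‖) ^ (-p) * ‖ζ‖ ^ (q - finrank ℝ V)) =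
      ENNReal.ofReal (ρ ^ (-p) * ρ ^ (q - finrank ℝ V)) *
        ENNReal.ofReal ((1 + ‖ρ⁻¹ • ζ‖) ^ (-p) * ‖ρ⁻¹ • ζ‖ ^ (q - finrank ℝ V)) := by
    have hnorm : ‖ζ‖ = ρ * ‖ρ⁻¹ • ζ‖ := by
      rw [norm_smul, norm_inv, norm_of_nonneg hρ.le, mul_inv_cancel_left₀ hρ.ne']
    have hsum : ρ + ‖ζ‖ = ρ * (1 + ‖ρ⁻¹ • ζ‖) := by rw [hnorm]; ring
    rw [← ENNReal.ofReal_mul (by positivity), hsum, hnorm, mul_rpow hρ.le (by positivity),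
      mul_rpow hρ.le (by positivity), mul_mul_mul_comm]
  have hpow : ρ ^ (-p) * ρ ^ (q - finrank ℝ V) * |((ρ⁻¹ ^ finrank ℝ V)⁻¹ : ℝ)| = ρ ^ (q - p) := by
    rw [inv_pow, inv_inv, abs_of_pos (by positivity), ← rpow_natCast, ← rpow_add hρ, ← rpow_add hρ]
    ring_nf
  simp_rw [hscale]
  rw [lintegral_const_mul' _ _ ENNReal.ofReal_ne_top, lintegral_comp_smul volume
    (fun ζ => ENNReal.ofReal ((1 + ‖ζ‖) ^ (-p) * ‖ζ‖ ^ (q - finrank ℝ V))) (inv_ne_zero hρ.ne'),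
    ← mul_assoc, ← ENNReal.ofReal_mul (by positivity), hpow]

/-- The part of the convolution `|β| * |α|` at `ξ` coming from the frequencies of `β` that are not
much smaller than `ξ`. -/
def highFreqConv (β α : V → ℂ) (ξ : V) : ℝ≥0∞ :=
  ∫⁻ η in {η : V | ‖ξ‖ ≤ 8 * ‖η‖}, ‖β η‖ₑ * ‖α (ξ - η)‖ₑ

lemma one_le_rpow_add_norm_sub_mul_rpow {W : Type*} [NormedAddCommGroup W] {p : ℝ} (hp : 0 ≤ p)
    {ξ η : W} (hη : η ≠ 0) (hξ : ‖ξ‖ ≤ 8 * ‖η‖) :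
    1 ≤ 17 ^ p * (‖ξ‖ + ‖ξ - η‖) ^ (-p) * ‖η‖ ^ p := by
  have hη0 : 0 < ‖η‖ := norm_pos_iff.mpr hη
  have hle : ‖ξ‖ + ‖ξ - η‖ ≤ 17 * ‖η‖ := by linarith [norm_sub_le ξ η]
  have hpos : 0 < ‖ξ‖ + ‖ξ - η‖ := by linarith [norm_sub_norm_le η ξ, norm_sub_rev ξ η]
  calc (1 : ℝ) ≤ ((‖ξ‖ + ‖ξ - η‖)⁻¹ * (17 * ‖η‖)) ^ p :=
        one_le_rpow ((one_le_inv_mul₀ hpos).mpr hle) hp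
    _ = 17 ^ p * (‖ξ‖ + ‖ξ - η‖) ^ (-p) * ‖η‖ ^ p := by
        rw [mul_rpow (by positivity) (by positivity), mul_rpow (by positivity) hη0.le,
          inv_rpow hpos.le, rpow_neg hpos.le]
        ring

omit [FiniteDimensional ℝ V] [MeasurableSpace V] [BorelSpace V] in
lemma sq_enorm_mul_enorm_le {s σ : ℝ} (hsσ : 0 ≤ s + σ) (β α : V → ℂ) {ξ η : V} (hη : η ≠ 0)
    (hηξ : η ≠ ξ) (hξ : ‖ξ‖ ≤ 8 * ‖η‖) :
    (‖β η‖ₑ * ‖α (ξ - η)‖ₑ) ^ 2 ≤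
      ENNReal.ofReal (17 ^ (2 * (s + σ))) * ENNReal.ofReal
          ((‖ξ‖ + ‖ξ - η‖) ^ (-(2 * (s + σ))) * ‖ξ - η‖ ^ (2 * σ - finrank ℝ V)) *
        (sobolevDensity (s + σ) β η * sobolevDensity (finrank ℝ V / 2 - σ) α (ξ - η)) := by
  have hcancel : ‖ξ - η‖ ^ (2 * σ - finrank ℝ V) * ‖ξ - η‖ ^ (2 * (finrank ℝ V / 2 - σ)) = 1 := by
    rw [← rpow_add (norm_pos_iff.mpr (sub_ne_zero.mpr hηξ.symm)), ← rpow_zero ‖ξ - η‖]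
    ring_nf
  have hweight : 1 ≤ ENNReal.ofReal (17 ^ (2 * (s + σ))) * ENNReal.ofReal
      ((‖ξ‖ + ‖ξ - η‖) ^ (-(2 * (s + σ))) * ‖ξ - η‖ ^ (2 * σ - finrank ℝ V)) *
      (ENNReal.ofReal (‖η‖ ^ (2 * (s + σ))) *
        ENNReal.ofReal (‖ξ - η‖ ^ (2 * (finrank ℝ V / 2 - σ)))) := by
    rw [← ENNReal.ofReal_mul (by positivity), ← ENNReal.ofReal_mul (by positivity),
      ← ENNReal.ofReal_mul (by positivity), ENNReal.one_le_ofReal]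
    refine (one_le_rpow_add_norm_sub_mul_rpow (mul_nonneg two_pos.le hsσ) hη hξ).trans_eq ?_
    linear_combination (-(17 ^ (2 * (s + σ)) * (‖ξ‖ + ‖ξ - η‖) ^ (-(2 * (s + σ))) *
      ‖η‖ ^ (2 * (s + σ)))) * hcancel
  calc (‖β η‖ₑ * ‖α (ξ - η)‖ₑ) ^ 2 ≤ _ := le_mul_of_one_le_left' hweight
    _ = _ := by simp only [sobolevDensity]; ring

lemma highFreqConv_sq_le [Nontrivial V] {s σ : ℝ} (hsσ : 0 ≤ s + σ) {β α : V → ℂ}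
    (hβ : Measurable β) (hα : Measurable α) {ξ : V} (hξ : ξ ≠ 0) :
    highFreqConv β α ξ ^ 2 ≤
      ENNReal.ofReal (17 ^ (2 * (s + σ))) * (ENNReal.ofReal (‖ξ‖ ^ (-(2 * s))) * ∫⁻ ζ : V,
        ENNReal.ofReal ((1 + ‖ζ‖) ^ (-(2 * (s + σ))) * ‖ζ‖ ^ (2 * σ - finrank ℝ V))) *
      ∫⁻ η, sobolevDensity (s + σ) β η * sobolevDensity (finrank ℝ V / 2 - σ) α (ξ - η) := by
  have hβ' := measurable_sobolevDensity (s + σ) hβ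
  have hα' := measurable_sobolevDensity (finrank ℝ V / 2 - σ) hα
  have hset : MeasurableSet {η : V | ‖ξ‖ ≤ 8 * ‖η‖} :=
    measurableSet_le measurable_const (by fun_prop)
  refine (sq_lintegral_le_of_sq_le_mul
    (g := fun η => ENNReal.ofReal (17 ^ (2 * (s + σ))) * ENNReal.ofReal
      ((‖ξ‖ + ‖ξ - η‖) ^ (-(2 * (s + σ))) * ‖ξ - η‖ ^ (2 * σ - finrank ℝ V)))
    (h := fun η => sobolevDensity (s + σ) β η * sobolevDensity (finrank ℝ V / 2 - σ) α (ξ - η))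
    (by fun_prop) (by fun_prop) ?_).trans ?_
  · filter_upwards [ae_restrict_mem hset, ae_restrict_of_ae (Measure.ae_ne volume 0),
      ae_restrict_of_ae (Measure.ae_ne volume ξ)] with η hmem hη hηξ
    exact sq_enorm_mul_enorm_le hsσ β α hη hηξ hmem
  · rw [lintegral_const_mul' _ _ ENNReal.ofReal_ne_top, show -(2 * s) = 2 * σ - 2 * (s + σ) by ring,
      ← lintegral_add_norm_rpow_mul_norm_rpow (norm_pos_iff.mpr hξ) (2 * (s + σ)) (2 * σ),
      ← lintegral_sub_left_eq_self (μ := volume) (fun ζ : V => ENNReal.ofReal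
        ((‖ξ‖ + ‖ζ‖) ^ (-(2 * (s + σ))) * ‖ζ‖ ^ (2 * σ - finrank ℝ V))) ξ]
    exact mul_le_mul' (mul_le_mul_right (setLIntegral_le_lintegral _ _) _)
      (setLIntegral_le_lintegral _ _)

lemma exists_lintegral_highFreqConv_sq_le [Nontrivial V] {s σ : ℝ} (hs : 0 < s) (hσ : 0 < σ) :
    ∃ K : ℝ≥0, ∀ β α : V → ℂ, Measurable β → Measurable α →
      ∫⁻ ξ, ENNReal.ofReal (‖ξ‖ ^ (2 * s)) * highFreqConv β α ξ ^ 2 ≤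
        K * (sobolevEnergy (s + σ) β * sobolevEnergy (finrank ℝ V / 2 - σ) α) := by
  set κ := ∫⁻ ζ : V,
    ENNReal.ofReal ((1 + ‖ζ‖) ^ (-(2 * (s + σ))) * ‖ζ‖ ^ (2 * σ - finrank ℝ V)) with hκ
  have hκ_ne_top : κ ≠ ∞ :=
    (integrable_one_add_norm_rpow_mul_norm_rpow (by linarith) (by linarith)).lintegral_lt_top.ne
  have hK : ENNReal.ofReal (17 ^ (2 * (s + σ))) * κ ≠ ∞ :=
    ENNReal.mul_ne_top ENNReal.ofReal_ne_top hκ_ne_top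
  refine ⟨(ENNReal.ofReal (17 ^ (2 * (s + σ))) * κ).toNNReal, fun β α hβ hα => ?_⟩
  rw [ENNReal.coe_toNNReal hK, sobolevEnergy, sobolevEnergy,
    ← lintegral_lintegral_mul_sub (measurable_sobolevDensity _ hβ) (measurable_sobolevDensity _ hα),
    ← lintegral_const_mul' _ _ hK]
  refine lintegral_mono_ae ?_
  filter_upwards [Measure.ae_ne volume 0] with ξ hξ
  have hcancel : ENNReal.ofReal (‖ξ‖ ^ (2 * s)) * ENNReal.ofReal (‖ξ‖ ^ (-(2 * s))) = 1 := by
    rw [← ENNReal.ofReal_mul (by positivity), ← rpow_add (norm_pos_iff.mpr hξ), add_neg_cancel,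
      rpow_zero, ENNReal.ofReal_one]
  grw [highFreqConv_sq_le (add_pos hs hσ).le hβ hα hξ, ← hκ]
  refine le_of_eq ?_
  calc _ = ENNReal.ofReal (‖ξ‖ ^ (2 * s)) * ENNReal.ofReal (‖ξ‖ ^ (-(2 * s))) * _ := ?_
    _ = _ := by rw [hcancel, one_mul]
  ring

end HighFrequencies

section ProductEstimate

lemma integrable_mul_comp_sub (f g : 𝓢(V, ℂ)) (x : V) : Integrable fun y => f y * g (x - y) :=
  f.integrable.mul_bdd (c := SchwartzMap.seminorm ℝ 0 0 g) (by fun_prop)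
    (.of_forall fun y => g.norm_le_seminorm ℝ (x - y))

lemma enorm_schwartzConv_le (β α : 𝓢(V, ℂ)) {j : ℤ} {ξ : V} (hξ : ξ ∈ dyadicAnnulus V j (j + 1)) :
    ‖schwartzConv β α ξ‖ₑ ≤
      ‖schwartzConv (schwartzMul (lowPass V (j - 2)) β) α ξ‖ₑ + highFreqConv β α ξ := by
  set u := schwartzMul (lowPass V (j - 2)) β
  have hsplit : schwartzConv β α ξ = schwartzConv u α ξ + ∫ η, (β η - u η) * α (ξ - η) := by
    simp only [schwartzConv_apply, sub_mul]
    rw [integral_sub (integrable_mul_comp_sub β α ξ) (integrable_mul_comp_sub u α ξ),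
      add_sub_cancel]
  have hdiff (η : V) : β η - u η = (1 - lowPass V (j - 2) η) * β η := by
    simp only [u, SchwartzMap.pairing_apply_apply, ContinuousLinearMap.mul_apply']
    ring
  have hlow (η : V) (hη : ¬‖ξ‖ ≤ 8 * ‖η‖) : β η - u η = 0 := by
    have h8 : (2 : ℝ) ^ (j + 1) = 8 * 2 ^ (j - 2) := by
      rw [show j + 1 = 3 + (j - 2) by ring, zpow_add₀ two_ne_zero]
      norm_num
    have hη' : ‖η‖ ≤ 2 ^ (j - 2) := by linarith [hξ.2]
    rw [hdiff, lowPass_eq_one hη', sub_self, zero_mul]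
  have hset : MeasurableSet {η : V | ‖ξ‖ ≤ 8 * ‖η‖} :=
    measurableSet_le measurable_const (by fun_prop)
  rw [hsplit, highFreqConv, ← lintegral_indicator hset]
  refine (enorm_add_le _ _).trans (add_le_add_right ?_ _)
  refine (enorm_integral_le_lintegral_enorm _).trans (lintegral_mono fun η => ?_)
  by_cases hη : η ∈ {η : V | ‖ξ‖ ≤ 8 * ‖η‖}
  · rw [indicator_of_mem hη, enorm_mul, hdiff, enorm_mul]
    gcongr
    exact mul_le_of_le_one_left' (enorm_one_sub_lowPass_le_one _ η)
  · simp [hlow η hη]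

lemma sobolevDensity_schwartzConv_le (s : ℝ) (β α : 𝓢(V, ℂ)) {j : ℤ} {ξ : V}
    (hξ : ξ ∈ dyadicAnnulus V j (j + 1)) :
    sobolevDensity s (schwartzConv β α) ξ ≤
      2 * (sobolevDensity s (schwartzConv (schwartzMul (lowPass V (j - 2)) β) α) ξ +
        ENNReal.ofReal (‖ξ‖ ^ (2 * s)) * highFreqConv β α ξ ^ 2) := by
  have add_sq (x y : ℝ≥0∞) : (x + y) ^ 2 ≤ 2 * (x ^ 2 + y ^ 2) := by
    have h := ENNReal.rpow_add_le_mul_rpow_add_rpow x y one_le_two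
    norm_num at h
    exact h
  calc sobolevDensity s (schwartzConv β α) ξ
      ≤ ENNReal.ofReal (‖ξ‖ ^ (2 * s)) *
          (2 * (‖schwartzConv (schwartzMul (lowPass V (j - 2)) β) α ξ‖ₑ ^ 2 +
            highFreqConv β α ξ ^ 2)) := by
        unfold sobolevDensity
        grw [enorm_schwartzConv_le β α hξ, add_sq]
    _ = _ := by
        unfold sobolevDensity
        ring

lemma sobolevEnergy_schwartzConv_le [Nontrivial V] {s : ℝ} (hs : 0 ≤ s) (b α : 𝓢(V, ℂ)) {M : ℝ≥0∞}
    (hb : ∀ x, ‖b x‖ₑ ≤ M) :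
    sobolevEnergy s (schwartzConv (𝓕 b) α) ≤
      2 * ((lowPassNorm V * M) ^ 2 * (ENNReal.ofReal (8 ^ (2 * s)) * (5 * sobolevEnergy s α)) +
        ∫⁻ ξ, ENNReal.ofReal (‖ξ‖ ^ (2 * s)) * highFreqConv (𝓕 b : 𝓢(V, ℂ)) α ξ ^ 2) := by
  set low : ℤ → V → ℝ≥0∞ := fun j =>
    sobolevDensity s (schwartzConv (schwartzMul (lowPass V (j - 2)) (𝓕 b)) α)
  set high : V → ℝ≥0∞ := fun ξ =>
    ENNReal.ofReal (‖ξ‖ ^ (2 * s)) * highFreqConv (𝓕 b : 𝓢(V, ℂ)) α ξ ^ 2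
  have hlow (j : ℤ) : Measurable (low j) :=
    measurable_sobolevDensity s (SchwartzMap.continuous _).measurable
  calc sobolevEnergy s (schwartzConv (𝓕 b) α)
      = ∑' j : ℤ, ∫⁻ ξ in dyadicAnnulus V j (j + 1), sobolevDensity s (schwartzConv (𝓕 b) α) ξ :=
        (tsum_setLIntegral_dyadicAnnulus_succ _).symm
    _ ≤ ∑' j : ℤ, ∫⁻ ξ in dyadicAnnulus V j (j + 1), 2 * (low j ξ + high ξ) := by
        refine ENNReal.tsum_le_tsum fun j => ?_
        exact setLIntegral_mono' (measurableSet_dyadicAnnulus _ _) fun ξ hξ =>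
          sobolevDensity_schwartzConv_le s (𝓕 b) α hξ
    _ = 2 * ((∑' j : ℤ, ∫⁻ ξ in dyadicAnnulus V j (j + 1), low j ξ) + ∫⁻ ξ, high ξ) := by
        simp_rw [lintegral_const_mul' _ _ ENNReal.ofNat_ne_top, lintegral_add_left (hlow _)]
        rw [ENNReal.tsum_mul_left, ENNReal.tsum_add, tsum_setLIntegral_dyadicAnnulus_succ]
    _ ≤ _ := by
        gcongr
        exact tsum_setLIntegral_sobolevDensity_schwartzConv_lowPass_le hs α b hb

lemma exists_sobolevEnergy_fourier_mul_le [Nontrivial V] {s σ : ℝ} (hs : 0 < s)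
    (hσ : 0 < σ) :
    ∃ C : ℝ≥0, ∀ (a b : 𝓢(V, ℂ)) {M : ℝ≥0∞}, (∀ x, ‖b x‖ₑ ≤ M) →
      sobolevEnergy s (𝓕 (fun x => a x * b x)) ≤
        C * (sobolevEnergy (finrank ℝ V / 2 - σ) (𝓕 ⇑a) * sobolevEnergy (s + σ) (𝓕 ⇑b) +
          sobolevEnergy s (𝓕 ⇑a) * M ^ 2) := by
  obtain ⟨K, hK⟩ := exists_lintegral_highFreqConv_sq_le (V := V) hs hσ
  set L := (lowPassNorm V ^ 2 * (ENNReal.ofReal (8 ^ (2 * s)) * 5)).toNNReal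
  have hL_coe : (L : ℝ≥0∞) = lowPassNorm V ^ 2 * (ENNReal.ofReal (8 ^ (2 * s)) * 5) :=
    ENNReal.coe_toNNReal (by finiteness [lowPassNorm_ne_top (V := V)])
  refine ⟨2 * (L + K), fun a b M hb => ?_⟩
  have hab : (fun x => a x * b x) = schwartzMul b a := funext fun x => mul_comm _ _
  rw [hab, ← SchwartzMap.fourier_coe, ← SchwartzMap.fourier_coe, ← SchwartzMap.fourier_coe,
    fourier_schwartzMul]
  grw [sobolevEnergy_schwartzConv_le hs.le b (𝓕 a) hb,
    hK _ _ (𝓕 b).continuous.measurable (𝓕 a).continuous.measurable]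
  set A := sobolevEnergy (finrank ℝ V / 2 - σ) (𝓕 a : 𝓢(V, ℂ))
  set B := sobolevEnergy (s + σ) (𝓕 b : 𝓢(V, ℂ))
  set D := sobolevEnergy s (𝓕 a : 𝓢(V, ℂ))
  calc _ = 2 * (L * (D * M ^ 2) + K * (A * B)) := by rw [hL_coe]; ring
    _ ≤ 2 * ((L + K) * (D * M ^ 2) + (L + K) * (A * B)) := by
        gcongr
        · exact le_self_add
        · exact le_add_self
    _ = _ := by push_cast; ring

omit [FiniteDimensional ℝ V] [MeasurableSpace V] [BorelSpace V] in
lemma enorm_le_ofReal_iSup_norm (f : 𝓢(V, ℂ)) (x : V) : ‖f x‖ₑ ≤ ENNReal.ofReal (⨆ y, ‖f y‖) := by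
  rw [← ofReal_norm]
  exact ENNReal.ofReal_le_ofReal <|
    le_ciSup (f := fun y => ‖f y‖) ⟨_, forall_mem_range.mpr (f.norm_le_seminorm ℝ)⟩ x

lemma le_sqrt_mul_add_of_ofReal_sq_le {t p q : ℝ} {K : ℝ≥0} (ht : 0 ≤ t) (hp : 0 ≤ p) (hq : 0 ≤ q)
    (h : ENNReal.ofReal t ^ 2 ≤ K * (ENNReal.ofReal p ^ 2 + ENNReal.ofReal q ^ 2)) :
    t ≤ √K * (p + q) := by
  have hsq : t ^ 2 ≤ K * (p ^ 2 + q ^ 2) := by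
    simpa [ENNReal.toReal_add, ht, hp, hq] using ENNReal.toReal_mono (by finiteness) h
  refine (pow_le_pow_iff_left₀ ht (by positivity) two_ne_zero).mp ?_
  rw [mul_pow, sq_sqrt K.coe_nonneg]
  refine hsq.trans (mul_le_mul_of_nonneg_left ?_ K.coe_nonneg)
  linarith [add_sq p q, mul_nonneg hp hq]

theorem product_law_hs_general [Nontrivial V] {s σ : ℝ} (hs : 0 < s) (hσ : 0 < σ) :
    ∃ C > (0 : ℝ), ∀ a b : 𝓢(V, ℂ),
      Integrable (fun ξ : V => ‖ξ‖ ^ (2 * (finrank ℝ V / 2 - σ)) * ‖𝓕 ⇑a ξ‖ ^ 2) →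
      Integrable (fun ξ : V => ‖ξ‖ ^ (2 * s) * ‖𝓕 (fun x => a x * b x) ξ‖ ^ 2) ∧
      homogeneousSobolevNorm s (fun x => a x * b x) ≤
        C * (homogeneousSobolevNorm (finrank ℝ V / 2 - σ) a * homogeneousSobolevNorm (s + σ) b
              + homogeneousSobolevNorm s a * ⨆ x, ‖b x‖) := by
  obtain ⟨K, hK⟩ := exists_sobolevEnergy_fourier_mul_le (V := V) hs hσ
  refine ⟨√K + 1, by positivity, fun a b ha => ?_⟩
  have hab : Integrable (fun ξ : V => ‖ξ‖ ^ (2 * s) * ‖𝓕 (fun x => a x * b x) ξ‖ ^ 2) :=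
    integrable_rpow_norm_mul_norm_sq_fourier (schwartzMul a b) hs.le
  refine ⟨hab, ?_⟩
  have hP := mul_nonneg (homogeneousSobolevNorm_nonneg (finrank ℝ V / 2 - σ) a)
    (homogeneousSobolevNorm_nonneg (s + σ) b)
  have hQ := mul_nonneg (homogeneousSobolevNorm_nonneg s a)
    (iSup_nonneg fun x => norm_nonneg (b x))
  have henergy := hK a b (enorm_le_ofReal_iSup_norm b)
  rw [← ofReal_homogeneousSobolevNorm_sq hab, ← ofReal_homogeneousSobolevNorm_sq ha,
    ← ofReal_homogeneousSobolevNorm_sq (integrable_rpow_norm_mul_norm_sq_fourier b (by positivity)),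
    ← ofReal_homogeneousSobolevNorm_sq (integrable_rpow_norm_mul_norm_sq_fourier a hs.le),
    ← mul_pow, ← mul_pow, ← ENNReal.ofReal_mul (homogeneousSobolevNorm_nonneg _ _),
    ← ENNReal.ofReal_mul (homogeneousSobolevNorm_nonneg _ _)] at henergy
  grw [le_sqrt_mul_add_of_ofReal_sq_le (homogeneousSobolevNorm_nonneg _ _) hP hQ henergy]
  gcongr
  exact le_add_of_nonneg_right zero_le_one

end ProductEstimate

end ProductLaw

/-- product law `‖ab‖_{Ḣ^s} ≲ ‖a‖_{Ḣ^{(d-1)/2}}‖b‖_{Ḣ^{s+1/2}} + ‖a‖_{Ḣ^s}‖b‖_{L^∞}`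
for Schwartz functions, with a constant depending only on `d` and `s`. -/
theorem product_law_hs (d : ℕ) (hd : 1 ≤ d) (s : ℝ) (hs : 0 < s) :
    ∃ C > (0:ℝ), ∀ a b : SchwartzMap (E d) ℂ,
      Integrable (fun ξ : E d => ‖ξ‖ ^ (2 * (((d:ℝ) - 1)/2)) * ‖𝓕 (⇑a) ξ‖ ^ 2) →
      Integrable (fun ξ : E d => ‖ξ‖ ^ (2 * s) * ‖𝓕 (⇑a) ξ‖ ^ 2) →
      Integrable (fun ξ : E d => ‖ξ‖ ^ (2 * (s + 1/2)) * ‖𝓕 (⇑b) ξ‖ ^ 2) →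
      Integrable (fun ξ : E d => ‖ξ‖ ^ (2 * s) * ‖𝓕 (fun x => a x * b x) ξ‖ ^ 2) ∧
      hNorm d s (fun x => a x * b x) ≤
        C * (hNorm d (((d:ℝ) - 1)/2) a * hNorm d (s + 1/2) b
              + hNorm d s a * ⨆ x : E d, ‖b x‖) := by
  have : Nontrivial (E d) := Module.nontrivial_of_finrank_pos (R := ℝ) <| by
    rwa [finrank_euclideanSpace_fin]
  obtain ⟨C, hC, hprod⟩ := product_law_hs_general (V := E d) hs (half_pos one_pos)
  have hexp : (Module.finrank ℝ (E d) : ℝ) / 2 - 1 / 2 = (d - 1) / 2 := by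
    rw [finrank_euclideanSpace_fin]; ring
  rw [hexp] at hprod
  exact ⟨C, hC, fun a b ha _ _ => hprod a b ha⟩
end
end

section
/- Let a and b be smooth compactly supported functions on ℝ³ = ℝ²_h × ℝ_v. Then ‖ab‖_{Ḣ^{1/2}(ℝ³)} ≤ C ‖a‖_{Ḣ^{1/2}(ℝ³)} ( ‖∇_h b‖_{L^∞_v L²_h} + ‖b‖_{L^∞(ℝ³)} + ‖∂₃ b‖_{L²_v Ḣ^{1/2}_h} ) for a universal constant C. -/
open MeasureTheory Real
open scoped FourierTransform ENNReal

noncomputable section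

/-- Embedding `ℝ² × ℝ → ℝ³`, `(x_h, x₃) ↦ (x₁,x₂,x₃)`. -/
noncomputable def emb (xh : E 2) (t : ℝ) : E 3 :=
  (EuclideanSpace.equiv (Fin 3) ℝ).symm ![xh 0, xh 1, t]

/-!
By Plancherel, `‖f‖²_{Ḣ^s}` is comparable to the sum over an orthonormal basis `(e_i)` of
`∫₀^∞ ‖f(· + t e_i) - f‖²_{L²} t^{-1-2s} dt`. For a product, the increment splits as
`b(x + v) (a(x + v) - a(x)) + a(x) (b(x + v) - b(x))`; the first term costs `‖b‖_{L^∞}`.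

In the second term with `v` horizontal, work slice by slice and cut `a` at frequency `1 / t`: the
high frequencies only need `‖b‖_{L^∞}`, while the low ones are bounded in `L^∞` by Cauchy–Schwarz in
frequency and multiply an increment of `b` of size `t ‖∇_h b‖_{L²_h}`. In two dimensions the two
powers of `t` balance. With `v` vertical, the embedding `Ḣ^{1/2}(ℝ²) ⊆ L⁴(ℝ²)` on slices bounds the
product by `‖a(·, z)‖_{Ḣ^{1/2}_h} ‖b(·, z + t) - b(·, z)‖_{Ḣ^{1/2}_h}`, and Hardy's inequality in
`t` turns the last factor into `‖∂₃ b‖_{L²_v Ḣ^{1/2}_h}`.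
-/

namespace AnisotropicProduct

open Set Filter Topology
open scoped SchwartzMap NNReal

section Integrals

lemma ofReal_rpow_mul_ofReal_rpow {x : ℝ} (hx : 0 < x) (a b : ℝ) :
    ENNReal.ofReal (x ^ a) * ENNReal.ofReal (x ^ b) = ENNReal.ofReal (x ^ (a + b)) := by
  rw [← ENNReal.ofReal_mul (rpow_nonneg hx.le a), ← rpow_add hx]

lemma ofReal_rpow_sq {x : ℝ} (hx : 0 ≤ x) (a : ℝ) :
    ENNReal.ofReal (x ^ a) ^ 2 = ENNReal.ofReal (x ^ (2 * a)) := by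
  rw [← ENNReal.ofReal_pow (rpow_nonneg hx a), mul_comm, rpow_mul hx,
    rpow_two]

lemma enorm_add_sq_le {F : Type*} [TopologicalSpace F] [ESeminormedAddMonoid F] (x y : F) :
    ‖x + y‖ₑ ^ 2 ≤ 2 * (‖x‖ₑ ^ 2 + ‖y‖ₑ ^ 2) := by
  refine (pow_le_pow_left' (enorm_add_le x y) 2).trans ?_
  simpa [show (2 - 1 : ℝ) = 1 by norm_num] using
    ENNReal.rpow_add_le_mul_rpow_add_rpow ‖x‖ₑ ‖y‖ₑ one_le_two

lemma lintegral_rpow_Ioc {a t : ℝ} (ha : -1 < a) (ht : 0 ≤ t) :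
    ∫⁻ s in Ioc 0 t, ENNReal.ofReal (s ^ a) = ENNReal.ofReal (t ^ (a + 1) / (a + 1)) := by
  rw [← ofReal_integral_eq_lintegral_ofReal, ← intervalIntegral.integral_of_le ht,
    integral_rpow (Or.inl ha), zero_rpow (by linarith), sub_zero]
  · exact (intervalIntegrable_iff_integrableOn_Ioc_of_le ht).1
      (intervalIntegral.intervalIntegrable_rpow' ha)
  · filter_upwards [ae_restrict_mem measurableSet_Ioc] with s hs
    exact rpow_nonneg hs.1.le _

lemma lintegral_rpow_Ici {a t : ℝ} (ha : a < -1) (ht : 0 < t) :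
    ∫⁻ s in Ici t, ENNReal.ofReal (s ^ a) = ENNReal.ofReal (-t ^ (a + 1) / (a + 1)) := by
  rw [setLIntegral_congr Ioi_ae_eq_Ici.symm, ← ofReal_integral_eq_lintegral_ofReal,
    integral_Ioi_rpow_of_lt ha ht]
  · exact integrableOn_Ioi_rpow_of_lt ha ht
  · filter_upwards [ae_restrict_mem measurableSet_Ioi] with s hs
    exact rpow_nonneg (ht.trans hs).le _

variable {α β : Type*} [MeasurableSpace α] [MeasurableSpace β]

lemma sq_lintegral_mul_le (μ : Measure α) {f g : α → ℝ≥0∞}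
    (hf : AEMeasurable f μ) (hg : AEMeasurable g μ) :
    (∫⁻ x, f x * g x ∂μ) ^ 2 ≤ (∫⁻ x, f x ^ 2 ∂μ) * ∫⁻ x, g x ^ 2 ∂μ := by
  have h := ENNReal.lintegral_mul_le_Lp_mul_Lq μ HolderConjugate.two_two hf hg
  simp only [Pi.mul_apply, ENNReal.rpow_two] at h
  refine (pow_le_pow_left' h 2).trans_eq ?_
  rw [mul_pow, ← ENNReal.rpow_two, ← ENNReal.rpow_two, ← ENNReal.rpow_mul, ← ENNReal.rpow_mul]
  norm_num

lemma measurable_setLIntegral {ν : Measure β} [SFinite ν] {G : β → ℝ≥0∞} (hG : Measurable G)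
    {r : α → β → Prop} (hr : MeasurableSet {p : α × β | r p.1 p.2}) :
    Measurable fun x ↦ ∫⁻ y in {y | r x y}, G y ∂ν := by
  have hslice (x : α) : MeasurableSet {y | r x y} := measurable_prodMk_left hr
  simp_rw [← lintegral_indicator (hslice _)]
  exact ((hG.comp measurable_snd).indicator hr).lintegral_prod_right'

lemma lintegral_mul_setLIntegral_swap {μ : Measure α} {ν : Measure β} [SFinite μ] [SFinite ν]
    {w : α → ℝ≥0∞} {G : β → ℝ≥0∞} (hw : Measurable w) (hG : Measurable G)
    {r : α → β → Prop} (hr : MeasurableSet {p : α × β | r p.1 p.2}) :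
    ∫⁻ x, w x * ∫⁻ y in {y | r x y}, G y ∂ν ∂μ = ∫⁻ y, G y * ∫⁻ x in {x | r x y}, w x ∂μ ∂ν := by
  have hleft (x : α) : w x * ∫⁻ y in {y | r x y}, G y ∂ν =
      ∫⁻ y, {p : α × β | r p.1 p.2}.indicator (fun p ↦ w p.1 * G p.2) (x, y) ∂ν := by
    rw [← lintegral_const_mul _ hG,
      ← lintegral_indicator (show MeasurableSet {y | r x y} from measurable_prodMk_left hr)]
    rfl
  have hright (y : β) : G y * ∫⁻ x in {x | r x y}, w x ∂μ =
      ∫⁻ x, {p : α × β | r p.1 p.2}.indicator (fun p ↦ w p.1 * G p.2) (x, y) ∂μ := by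
    rw [mul_comm, ← lintegral_mul_const _ hw,
      ← lintegral_indicator (show MeasurableSet {x | r x y} from measurable_prodMk_right hr)]
    rfl
  simp_rw [hleft, hright]
  exact lintegral_lintegral_swap
    (((hw.comp measurable_fst).mul (hG.comp measurable_snd)).indicator hr).aemeasurable

lemma setLIntegral_preimage_smul {W : Type*} [NormedAddCommGroup W] [NormedSpace ℝ W]
    [FiniteDimensional ℝ W] [MeasurableSpace W] [BorelSpace W] {μ : Measure W}
    [μ.IsAddHaarMeasure] {r : ℝ} (hr : 0 < r) {S : Set W} (hS : MeasurableSet S)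
    {f : W → ℝ≥0∞} (hf : Measurable f) :
    ∫⁻ x in (r • ·) ⁻¹' S, f (r • x) ∂μ =
      ENNReal.ofReal (r ^ Module.finrank ℝ W)⁻¹ * ∫⁻ x in S, f x ∂μ := by
  rw [← setLIntegral_map hS hf (measurable_const_smul r), Measure.map_addHaar_smul μ hr.ne',
    Measure.restrict_smul, lintegral_smul_measure, abs_of_pos (by positivity), smul_eq_mul]

end Integrals

section Hardy

-- Cauchy–Schwarz with the splitting `F = (s ^ (1/4) * F) * s ^ (-1/4)`.
lemma sq_lintegral_Ioc_le {F : ℝ → ℝ≥0∞} (hF : Measurable F) {t : ℝ} (ht : 0 ≤ t) :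
    (∫⁻ s in Ioc 0 t, F s) ^ 2 ≤
      ENNReal.ofReal (2 * t ^ (1 / 2 : ℝ)) *
        ∫⁻ s in Ioc 0 t, ENNReal.ofReal (s ^ (1 / 2 : ℝ)) * F s ^ 2 := by
  have hsplit : ∫⁻ s in Ioc 0 t, F s = ∫⁻ s in Ioc 0 t,
      ENNReal.ofReal (s ^ (-1 / 4 : ℝ)) * (ENNReal.ofReal (s ^ (1 / 4 : ℝ)) * F s) := by
    refine setLIntegral_congr_fun measurableSet_Ioc fun s hs ↦ ?_
    rw [← mul_assoc, ofReal_rpow_mul_ofReal_rpow hs.1]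
    norm_num
  rw [hsplit]
  refine (sq_lintegral_mul_le _ (by fun_prop) (by fun_prop)).trans_eq ?_
  congr 1
  · rw [show 2 * t ^ (1 / 2 : ℝ) = t ^ (-1 / 2 + 1 : ℝ) / (-1 / 2 + 1) by norm_num; ring,
      ← lintegral_rpow_Ioc (by norm_num) ht]
    refine setLIntegral_congr_fun measurableSet_Ioc fun s hs ↦ ?_
    rw [ofReal_rpow_sq hs.1.le]
    norm_num
  · refine setLIntegral_congr_fun measurableSet_Ioc fun s hs ↦ ?_
    rw [mul_pow, ofReal_rpow_sq hs.1.le]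
    norm_num

lemma lintegral_sq_lintegral_Ioc_le {F : ℝ → ℝ≥0∞} (hF : Measurable F) :
    ∫⁻ t in Ioi (0 : ℝ), (∫⁻ s in Ioc 0 t, F s) ^ 2 * ENNReal.ofReal (t ^ (-2 : ℝ)) ≤
      4 * ∫⁻ s in Ioi (0 : ℝ), F s ^ 2 := by
  have hpoint : ∀ t ∈ Ioi (0 : ℝ),
      (∫⁻ s in Ioc 0 t, F s) ^ 2 * ENNReal.ofReal (t ^ (-2 : ℝ)) ≤
        ENNReal.ofReal (2 * t ^ (-3 / 2 : ℝ)) *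
          ∫⁻ s in {s | s ≤ t}, ENNReal.ofReal (s ^ (1 / 2 : ℝ)) * F s ^ 2
            ∂volume.restrict (Ioi 0) := by
    intro t (ht : 0 < t)
    have hIoc : {s | s ≤ t} ∩ Ioi 0 = Ioc 0 t := by ext s; simp [and_comm]
    rw [Measure.restrict_restrict (s := {s | s ≤ t}) measurableSet_Iic, hIoc]
    refine (mul_le_mul_left (sq_lintegral_Ioc_le hF ht.le) _).trans_eq ?_
    rw [mul_right_comm, ← ENNReal.ofReal_mul (by positivity), mul_assoc, ← rpow_add ht]
    norm_num
  refine (setLIntegral_mono' measurableSet_Ioi hpoint).trans ?_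
  rw [lintegral_mul_setLIntegral_swap (r := fun t s ↦ s ≤ t) (by fun_prop) (by fun_prop)
      (measurableSet_le (by fun_prop) (by fun_prop)), ← lintegral_const_mul _ (by fun_prop)]
  refine setLIntegral_mono' measurableSet_Ioi fun s (hs : 0 < s) ↦ le_of_eq ?_
  have hIci : {t | s ≤ t} ∩ Ioi 0 = Ici s := by ext t; simpa using fun h ↦ hs.trans_le h
  have htail : ∫⁻ t in Ici s, ENNReal.ofReal (2 * t ^ (-3 / 2 : ℝ)) =
      ENNReal.ofReal (4 * s ^ (-1 / 2 : ℝ)) := by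
    simp_rw [ENNReal.ofReal_mul zero_le_two]
    rw [lintegral_const_mul _ (by fun_prop), lintegral_rpow_Ici (by norm_num) hs,
      ← ENNReal.ofReal_mul zero_le_two]
    congr 1
    rw [show (-3 / 2 + 1 : ℝ) = -1 / 2 by norm_num]
    ring
  rw [Measure.restrict_restrict (s := {t | s ≤ t}) measurableSet_Ici, hIci, htail, mul_right_comm,
    ← ENNReal.ofReal_mul (by positivity), mul_left_comm, ← rpow_add hs]
  norm_num

lemma enorm_sub_le_lintegral_Ioc {F : Type*} [NormedAddCommGroup F] [NormedSpace ℝ F]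
    [CompleteSpace F] {g g' : ℝ → F} (hg : ∀ t, HasDerivAt g (g' t) t) (hg' : Continuous g')
    (x : ℝ) {t : ℝ} (ht : 0 ≤ t) :
    ‖g (x + t) - g x‖ₑ ≤ ∫⁻ s in Ioc 0 t, ‖g' (x + s)‖ₑ := by
  have hderiv (s : ℝ) : HasDerivAt (fun s ↦ g (x + s)) (g' (x + s)) s := by
    simpa using (hg (x + s)).comp_const_add x s
  have hftc : ∫ s in (0 : ℝ)..t, g' (x + s) = g (x + t) - g x := by
    rw [intervalIntegral.integral_eq_sub_of_hasDerivAt (fun s _ ↦ hderiv s), add_zero]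
    exact Continuous.intervalIntegrable (by fun_prop) _ _
  rw [← hftc, intervalIntegral.integral_of_le ht]
  exact enorm_integral_le_lintegral_enorm _

lemma lintegral_enorm_sub_sq_le {F : Type*} [NormedAddCommGroup F] [NormedSpace ℝ F]
    [CompleteSpace F] {g g' : ℝ → F} (hg : ∀ t, HasDerivAt g (g' t) t) (hg' : Continuous g')
    (x : ℝ) :
    ∫⁻ t in Ioi (0 : ℝ), ‖g (x + t) - g x‖ₑ ^ 2 * ENNReal.ofReal (t ^ (-2 : ℝ)) ≤
      4 * ∫⁻ s, ‖g' s‖ₑ ^ 2 := by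
  have hmeas : Measurable fun s ↦ ‖g' (x + s)‖ₑ :=
    (hg'.comp (continuous_const_add x)).enorm.measurable
  calc ∫⁻ t in Ioi (0 : ℝ), ‖g (x + t) - g x‖ₑ ^ 2 * ENNReal.ofReal (t ^ (-2 : ℝ))
      ≤ ∫⁻ t in Ioi (0 : ℝ),
          (∫⁻ s in Ioc 0 t, ‖g' (x + s)‖ₑ) ^ 2 * ENNReal.ofReal (t ^ (-2 : ℝ)) := by
        refine setLIntegral_mono' measurableSet_Ioi fun t ht ↦ ?_
        gcongr
        exact enorm_sub_le_lintegral_Ioc hg hg' x (le_of_lt ht)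
    _ ≤ 4 * ∫⁻ s in Ioi (0 : ℝ), ‖g' (x + s)‖ₑ ^ 2 := lintegral_sq_lintegral_Ioc_le hmeas
    _ ≤ 4 * ∫⁻ s, ‖g' (x + s)‖ₑ ^ 2 := by gcongr; exact Measure.restrict_le_self
    _ = 4 * ∫⁻ s, ‖g' s‖ₑ ^ 2 := by rw [lintegral_add_left_eq_self (fun s ↦ ‖g' s‖ₑ ^ 2) x]

end Hardy

section SobolevEnergy

variable {V : Type*} [NormedAddCommGroup V] [InnerProductSpace ℝ V]

/-- The increment `x ↦ f (x + v) - f x` as a Schwartz function. -/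
def increment (v : V) (f : 𝓢(V, ℂ)) : 𝓢(V, ℂ) :=
  SchwartzMap.compSubConstCLM ℂ (-v) f - f

@[simp]
lemma increment_apply (v : V) (f : 𝓢(V, ℂ)) (x : V) : increment v f x = f (x + v) - f x := by
  simp [increment]

lemma norm_rpow_le_sum_abs_inner_rpow {ι : Type*} [Fintype ι] (b : OrthonormalBasis ι ℝ V)
    {s : ℝ} (hs0 : 0 < s) (hs1 : s ≤ 1) (ξ : V) :
    ‖ξ‖ ^ (2 * s) ≤ ∑ i, |inner ℝ (b i) ξ| ^ (2 * s) := by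
  have hsub := Finset.le_sum_of_subadditive_on_pred (fun x : ℝ ↦ x ^ s) (0 ≤ ·)
    (zero_rpow hs0.ne').le (fun x y hx hy ↦ rpow_add_le_add_rpow hx hy hs0.le hs1)
    (fun x y ↦ add_nonneg) (fun i ↦ inner ℝ (b i) ξ ^ 2) (s := Finset.univ)
    (fun i _ ↦ sq_nonneg _)
  rw [b.sum_sq_inner_right] at hsub
  simpa only [rpow_mul (abs_nonneg _), rpow_mul (norm_nonneg _), rpow_two, sq_abs] using hsub

variable [FiniteDimensional ℝ V] [MeasurableSpace V] [BorelSpace V]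

/-- The energy `∫ |ξ|^{2s} |𝓕f(ξ)|² dξ`, i.e. the square of the homogeneous Sobolev norm
`‖f‖_{Ḣ^s}`; it takes values in `ℝ≥0∞` so that Tonelli applies freely. -/
def sobolevEnergy (s : ℝ) (f : 𝓢(V, ℂ)) : ℝ≥0∞ :=
  ∫⁻ ξ, ENNReal.ofReal (‖ξ‖ ^ (2 * s)) * ‖𝓕 f ξ‖ₑ ^ 2

/-- The weight `t^{-1-2s}` of the Gagliardo–Slobodeckij seminorm of order `s`; only `t > 0`
is relevant. -/
def incrWeight (s t : ℝ) : ℝ≥0∞ := ENNReal.ofReal (t ^ (-(1 + 2 * s)))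

/-- The directional Gagliardo–Slobodeckij energy of `f`, built from its increments along `e`. -/
def incrEnergy (s : ℝ) (e : V) (f : 𝓢(V, ℂ)) : ℝ≥0∞ :=
  ∫⁻ t in Ioi (0 : ℝ), (∫⁻ x, ‖f (x + t • e) - f x‖ₑ ^ 2) * incrWeight s t

/-- The constant `∫₀^∞ |e^{2πit} - 1|² t^{-1-2s} dt` relating increments to the Fourier side. -/
def charIncrConst (s : ℝ) : ℝ≥0∞ :=
  ∫⁻ t in Ioi (0 : ℝ), ‖(𝐞 t : ℂ) - 1‖ₑ ^ 2 * incrWeight s t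

@[fun_prop]
lemma measurable_incrWeight (s : ℝ) : Measurable (incrWeight s) := by
  unfold incrWeight; fun_prop

section CharIncrement

lemma incrWeight_ne_top (s t : ℝ) : incrWeight s t ≠ ⊤ := ENNReal.ofReal_ne_top

lemma norm_fourierChar_sub_one (t : ℝ) : ‖(𝐞 t : ℂ) - 1‖ = 2 * |sin (π * t)| := by
  have h := Complex.norm_exp_I_mul_ofReal_sub_one (2 * π * t)
  rw [mul_comm] at h
  rw [fourierChar_apply, h, norm_mul, norm_eq_abs, norm_eq_abs, abs_two]
  ring_nf

lemma measurable_enorm_fourierChar_sub_one_sq :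
    Measurable fun t : ℝ ↦ ‖(𝐞 t : ℂ) - 1‖ₑ ^ 2 := by
  have := continuous_fourierChar
  fun_prop

lemma enorm_fourierChar_sub_one_sq_mul_incrWeight_le (s : ℝ) {t c a : ℝ} (ht : 0 < t)
    (h : ‖(𝐞 t : ℂ) - 1‖ ≤ c * t ^ a) :
    ‖(𝐞 t : ℂ) - 1‖ₑ ^ 2 * incrWeight s t ≤
      ENNReal.ofReal (c ^ 2 * t ^ (2 * a - (1 + 2 * s))) := by
  rw [incrWeight, ← ofReal_norm, ← ENNReal.ofReal_pow (norm_nonneg _),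
    ← ENNReal.ofReal_mul (by positivity)]
  refine ENNReal.ofReal_le_ofReal ?_
  calc ‖(𝐞 t : ℂ) - 1‖ ^ 2 * t ^ (-(1 + 2 * s))
      ≤ (c * t ^ a) ^ 2 * t ^ (-(1 + 2 * s)) := by gcongr
    _ = c ^ 2 * t ^ (2 * a - (1 + 2 * s)) := by
      rw [mul_pow, ← rpow_two (t ^ a), ← rpow_mul ht.le, mul_assoc, ← rpow_add ht]
      ring_nf

lemma charIncrConst_ne_top {s : ℝ} (hs0 : 0 < s) (hs1 : s < 1) : charIncrConst s ≠ ⊤ := by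
  rw [charIncrConst, ← Ioc_union_Ioi_eq_Ioi zero_le_one, lintegral_union measurableSet_Ioi
    (Ioc_disjoint_Ioi le_rfl)]
  refine ENNReal.add_ne_top.2 ⟨ne_top_of_le_ne_top ?_ (setLIntegral_mono' measurableSet_Ioc
    fun t ht ↦ enorm_fourierChar_sub_one_sq_mul_incrWeight_le (c := 2 * π) (a := 1) s ht.1 ?_),
    ne_top_of_le_ne_top ?_ (setLIntegral_mono' measurableSet_Ioi fun t ht ↦
    enorm_fourierChar_sub_one_sq_mul_incrWeight_le (c := 2) (a := 0) s (one_pos.trans ht) ?_)⟩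
  · simp_rw [ENNReal.ofReal_mul (sq_nonneg (2 * π))]
    rw [lintegral_const_mul _ (by fun_prop), lintegral_rpow_Ioc (by linarith) zero_le_one]
    finiteness
  · rw [norm_fourierChar_sub_one, rpow_one, mul_assoc]
    have := abs_sin_le_abs (x := π * t)
    rw [abs_of_pos (mul_pos pi_pos ht.1)] at this
    gcongr
  · simp_rw [ENNReal.ofReal_mul (sq_nonneg (2 : ℝ))]
    rw [lintegral_const_mul _ (by fun_prop), setLIntegral_congr Ioi_ae_eq_Ici,
      lintegral_rpow_Ici (by linarith) one_pos]
    finiteness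
  · rw [norm_fourierChar_sub_one, rpow_zero]
    gcongr
    exact abs_sin_le_one _

lemma charIncrConst_ne_zero (s : ℝ) : charIncrConst s ≠ 0 := by
  refine ((setLIntegral_pos_iff (measurable_enorm_fourierChar_sub_one_sq.mul
    (measurable_incrWeight s))).2 (lt_of_lt_of_le (b := volume (Ioo (0 : ℝ) 1)) (by simp)
    (measure_mono fun t ht ↦ ⟨?_, ht.1⟩))).ne'
  have hsin : 0 < sin (π * t) :=
    sin_pos_of_pos_of_lt_pi (mul_pos pi_pos ht.1) (by nlinarith [pi_pos, ht.2])
  have hnorm : 0 < ‖(𝐞 t : ℂ) - 1‖ := by rw [norm_fourierChar_sub_one]; positivity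
  have hweight : incrWeight s t ≠ 0 := by simpa [incrWeight] using rpow_pos_of_pos ht.1 _
  simpa [hweight] using norm_pos_iff.1 hnorm

lemma lintegral_fourierChar_mul_of_pos (s : ℝ) {y : ℝ} (hy : 0 < y) :
    ∫⁻ t in Ioi (0 : ℝ), ‖(𝐞 (t * y) : ℂ) - 1‖ₑ ^ 2 * incrWeight s t =
      charIncrConst s * ENNReal.ofReal (y ^ (2 * s)) := by
  have hpre : (fun t : ℝ ↦ y • t) ⁻¹' Ioi 0 = Ioi 0 := by ext t; simp [hy]
  have hscale : ∀ t ∈ Ioi (0 : ℝ), ‖(𝐞 (t * y) : ℂ) - 1‖ₑ ^ 2 * incrWeight s t =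
      ENNReal.ofReal (y ^ (1 + 2 * s)) *
        (‖(𝐞 (y • t) : ℂ) - 1‖ₑ ^ 2 * incrWeight s (y • t)) := by
    intro t (ht : 0 < t)
    rw [smul_eq_mul, mul_comm t y, mul_left_comm, incrWeight, incrWeight,
      ← ENNReal.ofReal_mul (by positivity), mul_rpow hy.le ht.le, ← mul_assoc, ← rpow_add hy,
      add_neg_cancel, rpow_zero, one_mul]
  have hmeas : Measurable fun t : ℝ ↦ ‖(𝐞 t : ℂ) - 1‖ₑ ^ 2 * incrWeight s t :=
    measurable_enorm_fourierChar_sub_one_sq.mul (measurable_incrWeight s)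
  have hsub := setLIntegral_preimage_smul (μ := volume) hy measurableSet_Ioi hmeas (S := Ioi 0)
  rw [hpre, Module.finrank_self, pow_one] at hsub
  rw [setLIntegral_congr_fun measurableSet_Ioi hscale,
    lintegral_const_mul' _ _ ENNReal.ofReal_ne_top, hsub, ← mul_assoc,
    ← rpow_neg_one, ofReal_rpow_mul_ofReal_rpow hy, mul_comm, charIncrConst]
  ring_nf

lemma lintegral_fourierChar_mul {s : ℝ} (hs : 0 < s) (y : ℝ) :
    ∫⁻ t in Ioi (0 : ℝ), ‖(𝐞 (t * y) : ℂ) - 1‖ₑ ^ 2 * incrWeight s t =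
      charIncrConst s * ENNReal.ofReal (|y| ^ (2 * s)) := by
  have hneg (t : ℝ) : ‖(𝐞 (-t) : ℂ) - 1‖ₑ = ‖(𝐞 t : ℂ) - 1‖ₑ := by
    rw [← ofReal_norm, ← ofReal_norm, norm_fourierChar_sub_one, norm_fourierChar_sub_one, mul_neg,
      sin_neg, abs_neg]
  rcases lt_trichotomy y 0 with hy | rfl | hy
  · rw [abs_of_neg hy, ← lintegral_fourierChar_mul_of_pos s (neg_pos.2 hy)]
    simp_rw [mul_neg, hneg]
  · simp [hs.ne']
  · rw [abs_of_pos hy, lintegral_fourierChar_mul_of_pos s hy]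

end CharIncrement

section Plancherel

lemma lintegral_enorm_sq_eq (f : 𝓢(V, ℂ)) :
    ∫⁻ x, ‖f x‖ₑ ^ 2 = ENNReal.ofReal (∫ x, ‖f x‖ ^ 2) := by
  rw [ofReal_integral_eq_lintegral_ofReal ((f.memLp 2 volume).integrable_norm_pow two_ne_zero)
    (Eventually.of_forall fun x ↦ sq_nonneg _)]
  simp_rw [ENNReal.ofReal_pow (norm_nonneg _), ofReal_norm]

lemma lintegral_enorm_sq_fourier (f : 𝓢(V, ℂ)) : ∫⁻ ξ, ‖𝓕 f ξ‖ₑ ^ 2 = ∫⁻ x, ‖f x‖ₑ ^ 2 := by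
  rw [lintegral_enorm_sq_eq, lintegral_enorm_sq_eq, SchwartzMap.integral_norm_sq_fourier]

lemma fourier_sub_apply (f g : 𝓢(V, ℂ)) (ξ : V) : 𝓕 (f - g) ξ = 𝓕 f ξ - 𝓕 g ξ := by
  rw [sub_eq_add_neg, FourierTransform.fourier_add, FourierTransform.fourier_neg, add_apply,
    neg_apply, ← sub_eq_add_neg]

lemma fourier_increment (v : V) (f : 𝓢(V, ℂ)) (ξ : V) :
    𝓕 (increment v f) ξ = ((𝐞 (inner ℝ v ξ) : ℂ) - 1) * 𝓕 f ξ := by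
  have hshift := congrFun
    (VectorFourier.fourierIntegral_comp_add_right 𝐞 volume (innerₗ V) f v) ξ
  have htranslate : 𝓕 (SchwartzMap.compSubConstCLM ℂ (-v) f) ξ = 𝐞 (inner ℝ v ξ) • 𝓕 f ξ := by
    simp_rw [SchwartzMap.fourier_coe]
    rw [show ⇑(SchwartzMap.compSubConstCLM ℂ (-v) f) = f ∘ fun x ↦ x + v by ext x; simp]
    exact hshift
  rw [increment, fourier_sub_apply, htranslate, sub_mul, one_mul, Circle.smul_def, smul_eq_mul]

lemma incrEnergy_eq {s : ℝ} (hs0 : 0 < s) (hs1 : s < 1) (e : V) (f : 𝓢(V, ℂ)) :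
    incrEnergy s e f =
      charIncrConst s * ∫⁻ ξ, ENNReal.ofReal (|inner ℝ e ξ| ^ (2 * s)) * ‖𝓕 f ξ‖ₑ ^ 2 := by
  have hfreq (t : ℝ) : (∫⁻ x, ‖f (x + t • e) - f x‖ₑ ^ 2) * incrWeight s t =
      ∫⁻ ξ, ‖(𝐞 (t * inner ℝ e ξ) : ℂ) - 1‖ₑ ^ 2 * ‖𝓕 f ξ‖ₑ ^ 2 * incrWeight s t := by
    rw [lintegral_mul_const' _ _ (incrWeight_ne_top s t)]
    simp_rw [← increment_apply]
    rw [← lintegral_enorm_sq_fourier]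
    simp_rw [fourier_increment, enorm_mul, mul_pow, real_inner_smul_left]
  have hmeas : Measurable fun p : ℝ × V ↦
      ‖(𝐞 (p.1 * inner ℝ e p.2) : ℂ) - 1‖ₑ ^ 2 * ‖𝓕 f p.2‖ₑ ^ 2 * incrWeight s p.1 :=
    ((measurable_enorm_fourierChar_sub_one_sq.comp (by fun_prop)).mul
      (((𝓕 f).continuous.comp continuous_snd).enorm.measurable.pow_const 2)).mul (by fun_prop)
  simp_rw [incrEnergy, hfreq]
  rw [lintegral_lintegral_swap hmeas.aemeasurable,
    ← lintegral_const_mul' _ _ (charIncrConst_ne_top hs0 hs1)]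
  refine lintegral_congr fun ξ ↦ ?_
  simp_rw [mul_right_comm _ (‖𝓕 f ξ‖ₑ ^ 2)]
  rw [lintegral_mul_const' _ _ (by finiteness), lintegral_fourierChar_mul hs0, mul_assoc]

lemma incrEnergy_le {s : ℝ} (hs0 : 0 < s) (hs1 : s < 1) {e : V} (he : ‖e‖ ≤ 1) (f : 𝓢(V, ℂ)) :
    incrEnergy s e f ≤ charIncrConst s * sobolevEnergy s f := by
  rw [incrEnergy_eq hs0 hs1, sobolevEnergy]
  gcongr with ξ
  exact (abs_real_inner_le_norm e ξ).trans (mul_le_of_le_one_left (norm_nonneg _) he)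

lemma charIncrConst_mul_sobolevEnergy_le {ι : Type*} [Fintype ι] (b : OrthonormalBasis ι ℝ V)
    {s : ℝ} (hs0 : 0 < s) (hs1 : s < 1) (f : 𝓢(V, ℂ)) :
    charIncrConst s * sobolevEnergy s f ≤ ∑ i, incrEnergy s (b i) f := by
  simp_rw [incrEnergy_eq hs0 hs1]
  rw [← Finset.mul_sum, ← lintegral_finsetSum _ fun i _ ↦ by fun_prop, sobolevEnergy]
  gcongr with ξ
  rw [← Finset.sum_mul, ← ENNReal.ofReal_sum_of_nonneg fun i _ ↦ by positivity]
  gcongr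
  exact norm_rpow_le_sum_abs_inner_rpow b hs0 hs1.le ξ

lemma sobolevEnergy_ne_top {s : ℝ} (hs : 0 ≤ s) (f : 𝓢(V, ℂ)) : sobolevEnergy s f ≠ ⊤ := by
  set k := ⌈2 * s⌉₊
  have hpow (ξ : V) : ‖ξ‖ ^ (2 * s) ≤ 1 + ‖ξ‖ ^ k := by
    rcases le_total ‖ξ‖ 1 with h | h
    · exact (rpow_le_one (norm_nonneg ξ) h (by positivity)).trans (by simp)
    · calc ‖ξ‖ ^ (2 * s) ≤ ‖ξ‖ ^ (k : ℝ) := rpow_le_rpow_of_exponent_le h (Nat.le_ceil _)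
        _ ≤ 1 + ‖ξ‖ ^ k := by simp
  obtain ⟨M, hM⟩ := (𝓕 f).decay 0 0
  have hbound (ξ : V) : ‖𝓕 f ξ‖ ≤ M := by simpa using hM.2 ξ
  have hint := ((𝓕 f).integrable.norm.add ((𝓕 f).integrable_pow_mul volume k)).mul_const M
  refine ne_top_of_le_ne_top hint.lintegral_lt_top.ne (lintegral_mono fun ξ ↦ ?_)
  rw [← ofReal_norm, ← ENNReal.ofReal_pow (norm_nonneg _), ← ENNReal.ofReal_mul (by positivity)]
  refine ENNReal.ofReal_le_ofReal ?_
  calc ‖ξ‖ ^ (2 * s) * ‖𝓕 f ξ‖ ^ 2 = ‖ξ‖ ^ (2 * s) * ‖𝓕 f ξ‖ * ‖𝓕 f ξ‖ := by ring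
    _ ≤ (1 + ‖ξ‖ ^ k) * ‖𝓕 f ξ‖ * M := by gcongr; exacts [hpow ξ, hbound ξ]
    _ = (‖𝓕 f ξ‖ + ‖ξ‖ ^ k * ‖𝓕 f ξ‖) * M := by ring

end Plancherel

section Frequencies

lemma exists_lowFreq (f : 𝓢(V, ℂ)) {R : ℝ} (hR : 0 < R) :
    ∃ g : 𝓢(V, ℂ), (∀ x, ‖g x‖ₑ ≤ ∫⁻ ξ in Metric.ball 0 (2 * R), ‖𝓕 f ξ‖ₑ) ∧
      ∫⁻ x, ‖f x - g x‖ₑ ^ 2 ≤ ∫⁻ ξ in {ξ | R ≤ ‖ξ‖}, ‖𝓕 f ξ‖ₑ ^ 2 := by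
  let χ : ContDiffBump (0 : V) := ⟨R, 2 * R, hR, by linarith⟩
  have hχ : (fun ξ ↦ (χ ξ : ℂ)).HasTemperateGrowth :=
    (χ.hasCompactSupport.comp_left (g := ((↑) : ℝ → ℂ)) rfl).hasTemperateGrowth
      (Complex.ofRealCLM.contDiff.comp χ.contDiff)
  let G : 𝓢(V, ℂ) := SchwartzMap.smulLeftCLM ℂ (fun ξ ↦ (χ ξ : ℂ)) (𝓕 f)
  have hG (ξ : V) : G ξ = χ ξ * 𝓕 f ξ := SchwartzMap.smulLeftCLM_apply_apply hχ _ ξ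
  refine ⟨𝓕⁻ G, fun x ↦ ?_, ?_⟩
  · rw [SchwartzMap.fourierInv_coe, fourierInv_eq]
    refine (enorm_integral_le_lintegral_enorm _).trans ?_
    rw [← lintegral_indicator Metric.isOpen_ball.measurableSet]
    refine lintegral_mono fun ξ ↦ ?_
    by_cases hξ : ξ ∈ Metric.ball 0 (2 * R)
    · rw [indicator_of_mem hξ, ← ofReal_norm, Circle.norm_smul, ofReal_norm, hG, enorm_mul]
      refine mul_le_of_le_one_left' ?_
      rw [← ofReal_norm, Complex.norm_real, norm_of_nonneg χ.nonneg]
      exact ENNReal.ofReal_le_one.2 χ.le_one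
    · simp [hG, χ.zero_of_le_dist (not_lt.1 hξ)]
  · have hfreq (ξ : V) : 𝓕 (f - 𝓕⁻ G) ξ = ((1 - χ ξ : ℝ) : ℂ) * 𝓕 f ξ := by
      rw [fourier_sub_apply, FourierTransform.fourier_fourierInv_eq, hG]
      push_cast
      ring
    simp_rw [← sub_apply]
    rw [← lintegral_enorm_sq_fourier,
      ← lintegral_indicator (measurableSet_le measurable_const measurable_norm)]
    refine lintegral_mono fun ξ ↦ ?_
    by_cases hξ : R ≤ ‖ξ‖
    · rw [indicator_of_mem (show ξ ∈ {ξ | R ≤ ‖ξ‖} from hξ), hfreq, enorm_mul]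
      gcongr
      refine mul_le_of_le_one_left' ?_
      rw [← ofReal_norm, Complex.norm_real, norm_of_nonneg (sub_nonneg.2 χ.le_one)]
      exact ENNReal.ofReal_le_one.2 (sub_le_self _ χ.nonneg)
    · have hone : χ ξ = 1 := χ.one_of_mem_closedBall (by simpa using (not_le.1 hξ).le)
      simp [hfreq, hone]

variable (V) in
/-- The constant `∫_{|ξ| < 1} |ξ|^α dξ`, finite for `α > -dim V`. -/
def ballRpowConst (α : ℝ) : ℝ≥0∞ :=
  ∫⁻ ξ : V in Metric.ball 0 1, ENNReal.ofReal (‖ξ‖ ^ α)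

lemma ballRpowConst_ne_top [Nontrivial V] {α : ℝ} (hα : -(Module.finrank ℝ V : ℝ) < α) :
    ballRpowConst V α ≠ ⊤ := by
  have hint : IntegrableOn (fun ξ : V ↦ ‖ξ‖ ^ α) (Metric.ball 0 1) := by
    refine integrableOn_ball_of_norm_le_rpow (μ := volume) (C := 1) (α := -α)
      Module.finrank_pos (by linarith) (Eventually.of_forall fun ξ ↦ ?_)
      (Measurable.aestronglyMeasurable (by fun_prop))
    rw [neg_neg, one_mul, norm_of_nonneg (by positivity)]
  exact hint.lintegral_lt_top.ne

lemma lintegral_ball_rpow (α : ℝ) {R : ℝ} (hR : 0 < R) :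
    ∫⁻ ξ : V in Metric.ball 0 R, ENNReal.ofReal (‖ξ‖ ^ α) =
      ballRpowConst V α * ENNReal.ofReal (R ^ (Module.finrank ℝ V + α)) := by
  have hpre : (fun ξ : V ↦ R⁻¹ • ξ) ⁻¹' Metric.ball 0 1 = Metric.ball 0 R := by
    ext ξ
    simp [norm_smul, abs_of_pos hR, inv_mul_lt_iff₀ hR]
  have hscale (ξ : V) : ENNReal.ofReal (‖ξ‖ ^ α) =
      ENNReal.ofReal (R ^ α) * ENNReal.ofReal (‖R⁻¹ • ξ‖ ^ α) := by
    rw [← ENNReal.ofReal_mul (by positivity), ← mul_rpow hR.le (norm_nonneg _), norm_smul,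
      norm_of_nonneg (by positivity), mul_inv_cancel_left₀ hR.ne']
  have hsub := setLIntegral_preimage_smul (μ := volume) (inv_pos.2 hR) (Metric.isOpen_ball (x := 0)
    (ε := 1)).measurableSet (f := fun ξ : V ↦ ENNReal.ofReal (‖ξ‖ ^ α)) (by fun_prop)
  rw [hpre] at hsub
  rw [lintegral_congr hscale, lintegral_const_mul' _ _ ENNReal.ofReal_ne_top, hsub, inv_pow,
    inv_inv, ← rpow_natCast, ← mul_assoc, ofReal_rpow_mul_ofReal_rpow hR, mul_comm,
    ballRpowConst, add_comm]

variable {F : V → ℝ≥0∞}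

-- Cauchy–Schwarz with the splitting `F = |ξ| ^ (-β/2) * (|ξ| ^ (β/2) * F)`.
lemma sq_lintegral_ball_le [Nontrivial V] (hF : Measurable F) (β : ℝ) {R : ℝ} (hR : 0 < R) :
    (∫⁻ ξ in Metric.ball 0 R, F ξ) ^ 2 ≤
      ballRpowConst V (-β) * ENNReal.ofReal (R ^ (Module.finrank ℝ V - β)) *
        ∫⁻ ξ in Metric.ball 0 R, ENNReal.ofReal (‖ξ‖ ^ β) * F ξ ^ 2 := by
  have hsplit : ∫⁻ ξ in Metric.ball 0 R, F ξ = ∫⁻ ξ in Metric.ball 0 R,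
      ENNReal.ofReal (‖ξ‖ ^ (-β / 2)) * (ENNReal.ofReal (‖ξ‖ ^ (β / 2)) * F ξ) := by
    refine lintegral_congr_ae (ae_restrict_of_ae ?_)
    filter_upwards [Measure.ae_ne volume (0 : V)] with ξ hξ
    rw [← mul_assoc, ofReal_rpow_mul_ofReal_rpow (norm_pos_iff.2 hξ), ← add_div, neg_add_cancel,
      zero_div, rpow_zero, ENNReal.ofReal_one, one_mul]
  rw [hsplit, sub_eq_add_neg, ← lintegral_ball_rpow (-β) hR]
  refine (sq_lintegral_mul_le _ (by fun_prop) (by fun_prop)).trans_eq ?_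
  simp_rw [mul_pow, ofReal_rpow_sq (norm_nonneg _), mul_div_cancel₀ _ (two_ne_zero (α := ℝ))]

lemma ofReal_rpow_mul_sq_lintegral_ball_div_le [Nontrivial V] (hF : Measurable F) (σ β : ℝ)
    {ρ t : ℝ} (hρ : 0 < ρ) (ht : 0 < t) :
    ENNReal.ofReal (t ^ (Module.finrank ℝ V - 1 - σ)) *
        (∫⁻ ξ in Metric.ball 0 (ρ / t), F ξ) ^ 2 ≤
      ballRpowConst V (-β) * ENNReal.ofReal (ρ ^ (Module.finrank ℝ V - β)) *
        (ENNReal.ofReal (t ^ (β - σ - 1)) *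
          ∫⁻ ξ in {ξ | ‖ξ‖ < ρ / t}, ENNReal.ofReal (‖ξ‖ ^ β) * F ξ ^ 2) := by
  set n : ℝ := (Module.finrank ℝ V : ℝ)
  have hpow : ENNReal.ofReal (t ^ (n - 1 - σ)) * ENNReal.ofReal ((ρ / t) ^ (n - β)) =
      ENNReal.ofReal (ρ ^ (n - β)) * ENNReal.ofReal (t ^ (β - σ - 1)) := by
    rw [div_rpow hρ.le ht.le, div_eq_mul_inv, ← rpow_neg ht.le,
      ENNReal.ofReal_mul (by positivity), mul_left_comm, ofReal_rpow_mul_ofReal_rpow ht]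
    ring_nf
  refine (mul_le_mul_right (sq_lintegral_ball_le hF β (div_pos hρ ht)) _).trans_eq ?_
  rw [ball_zero_eq, ← mul_assoc, mul_left_comm, hpow]
  ring

lemma lintegral_rpow_mul_sq_lintegral_ball_le [Nontrivial V] (hF : Measurable F) {σ β ρ : ℝ}
    (hσβ : σ < β) (hβ : β < Module.finrank ℝ V) (hρ : 0 < ρ) :
    ∫⁻ t in Ioi (0 : ℝ), ENNReal.ofReal (t ^ (Module.finrank ℝ V - 1 - σ)) *
        (∫⁻ ξ in Metric.ball 0 (ρ / t), F ξ) ^ 2 ≤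
      ballRpowConst V (-β) * ENNReal.ofReal (ρ ^ (Module.finrank ℝ V - σ) / (β - σ)) *
        ∫⁻ ξ, ENNReal.ofReal (‖ξ‖ ^ σ) * F ξ ^ 2 := by
  have hC : ballRpowConst V (-β) ≠ ⊤ := ballRpowConst_ne_top (neg_lt_neg hβ)
  refine (setLIntegral_mono' measurableSet_Ioi fun t ht ↦
    ofReal_rpow_mul_sq_lintegral_ball_div_le hF σ β hρ ht).trans ?_
  rw [lintegral_const_mul' _ _ (by finiteness), lintegral_mul_setLIntegral_swap
    (r := fun t ξ ↦ ‖ξ‖ < ρ / t) (by fun_prop) (by fun_prop)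
    (measurableSet_lt (by fun_prop) (by fun_prop)), mul_assoc, mul_assoc]
  refine mul_le_mul_right ?_ _
  rw [← lintegral_const_mul' _ _ ENNReal.ofReal_ne_top,
    ← lintegral_const_mul' _ _ ENNReal.ofReal_ne_top]
  refine lintegral_mono_ae ?_
  filter_upwards [Measure.ae_ne volume (0 : V)] with ξ hξ
  set n : ℝ := (Module.finrank ℝ V : ℝ)
  have hξ0 : 0 < ‖ξ‖ := norm_pos_iff.2 hξ
  have hβσ : 0 < β - σ := sub_pos.2 hσβ
  have hIoc : {t | ‖ξ‖ < ρ / t} ∩ Ioi 0 ⊆ Ioc 0 (ρ / ‖ξ‖) := fun t ht ↦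
    ⟨ht.2, ((lt_div_comm₀ hξ0 ht.2).1 ht.1).le⟩
  have htime : ∫⁻ t in {t | ‖ξ‖ < ρ / t}, ENNReal.ofReal (t ^ (β - σ - 1))
      ∂volume.restrict (Ioi 0) ≤ ENNReal.ofReal ((ρ / ‖ξ‖) ^ (β - σ) / (β - σ)) := by
    rw [Measure.restrict_restrict (measurableSet_lt (by fun_prop) (by fun_prop))]
    refine (lintegral_mono_set hIoc).trans_eq ?_
    rw [lintegral_rpow_Ioc (by linarith) (by positivity), sub_add_cancel]
  have hpow : ρ ^ (n - β) * (‖ξ‖ ^ β * ((ρ / ‖ξ‖) ^ (β - σ) / (β - σ))) =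
      ρ ^ (n - σ) / (β - σ) * ‖ξ‖ ^ σ := by
    rw [div_rpow hρ.le hξ0.le, ← sub_add_sub_cancel n β σ, rpow_add hρ,
      rpow_sub hξ0]
    field_simp
  calc ENNReal.ofReal (ρ ^ (n - β)) * (ENNReal.ofReal (‖ξ‖ ^ β) * F ξ ^ 2 *
        ∫⁻ t in {t | ‖ξ‖ < ρ / t}, ENNReal.ofReal (t ^ (β - σ - 1)) ∂volume.restrict (Ioi 0))
      ≤ ENNReal.ofReal (ρ ^ (n - β)) * (ENNReal.ofReal (‖ξ‖ ^ β) * F ξ ^ 2 *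
          ENNReal.ofReal ((ρ / ‖ξ‖) ^ (β - σ) / (β - σ))) := by gcongr
    _ = ENNReal.ofReal (ρ ^ (n - σ) / (β - σ)) * (ENNReal.ofReal (‖ξ‖ ^ σ) * F ξ ^ 2) := by
      rw [mul_right_comm, ← ENNReal.ofReal_mul (by positivity), ← mul_assoc,
        ← ENNReal.ofReal_mul (by positivity), hpow, ENNReal.ofReal_mul (by positivity), mul_assoc]

lemma lintegral_highFreq_mul_incrWeight (hF : Measurable F) {s : ℝ} (hs : 0 < s) :
    ∫⁻ t in Ioi (0 : ℝ), (∫⁻ ξ in {ξ | t⁻¹ ≤ ‖ξ‖}, F ξ) * incrWeight s t =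
      ENNReal.ofReal (2 * s)⁻¹ * ∫⁻ ξ, ENNReal.ofReal (‖ξ‖ ^ (2 * s)) * F ξ := by
  simp_rw [mul_comm _ (incrWeight s _)]
  rw [lintegral_mul_setLIntegral_swap (r := fun t ξ ↦ t⁻¹ ≤ ‖ξ‖) (by fun_prop) hF
    (measurableSet_le (by fun_prop) (by fun_prop)), ← lintegral_const_mul _ (by fun_prop)]
  refine lintegral_congr fun ξ ↦ ?_
  rw [Measure.restrict_restrict (measurableSet_le (by fun_prop) (by fun_prop))]
  rcases eq_or_ne ξ 0 with rfl | hξ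
  · have hempty : {t : ℝ | t⁻¹ ≤ ‖(0 : V)‖} ∩ Ioi 0 = ∅ := by
      ext t; simp +contextual
    rw [hempty]
    simp [hs.ne']
  · have hξ0 : 0 < ‖ξ‖ := norm_pos_iff.2 hξ
    have hIci : {t | t⁻¹ ≤ ‖ξ‖} ∩ Ioi 0 = Ici ‖ξ‖⁻¹ := by
      ext t
      exact ⟨fun ht ↦ mem_Ici.2 (inv_le_of_inv_le₀ ht.2 ht.1), fun ht ↦
        ⟨inv_le_of_inv_le₀ hξ0 ht, (inv_pos.2 hξ0).trans_le ht⟩⟩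
    simp_rw [hIci, incrWeight]
    rw [lintegral_rpow_Ici (by linarith) (inv_pos.2 hξ0), inv_rpow hξ0.le, ← rpow_neg hξ0.le,
      mul_comm, ← mul_assoc, ← ENNReal.ofReal_mul (by positivity)]
    congr 2
    rw [show -(-(1 + 2 * s) + 1) = 2 * s by ring, show -(1 + 2 * s) + 1 = -(2 * s) by ring]
    field_simp

end Frequencies

section HorizontalRemainder

open scoped LineDeriv

/-- The term of the increment energy of `a * b` in which the increment falls on `b`:
`∫_0^∞ ∫ |a(x)|² |b(x + t e) - b(x)|² dx t^{-(1+2s)} dt`. -/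
def remainderEnergy (s : ℝ) (e : V) (a b : 𝓢(V, ℂ)) : ℝ≥0∞ :=
  ∫⁻ t in Ioi (0 : ℝ), (∫⁻ x, ‖a x‖ₑ ^ 2 * ‖b (x + t • e) - b x‖ₑ ^ 2) * incrWeight s t

lemma norm_fourierChar_sub_one_le (t : ℝ) : ‖(𝐞 t : ℂ) - 1‖ ≤ 2 * π * |t| := by
  rw [norm_fourierChar_sub_one, mul_assoc, ← abs_of_pos pi_pos, ← abs_mul, abs_of_pos pi_pos]
  exact mul_le_mul_of_nonneg_left abs_sin_le_abs zero_le_two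

lemma lintegral_enorm_increment_sq_le (v : V) (f : 𝓢(V, ℂ)) :
    ∫⁻ x, ‖f (x + v) - f x‖ₑ ^ 2 ≤ ∫⁻ x, ‖fderiv ℝ f x v‖ₑ ^ 2 := by
  simp_rw [← increment_apply, ← SchwartzMap.lineDerivOp_apply_eq_fderiv]
  rw [← lintegral_enorm_sq_fourier (increment v f), ← lintegral_enorm_sq_fourier (∂_{v} f)]
  have hgrowth : (fun ξ : V ↦ inner ℝ ξ v).HasTemperateGrowth := by fun_prop
  refine lintegral_mono fun ξ ↦ ?_
  gcongr
  rw [fourier_increment, SchwartzMap.fourier_lineDerivOp_eq, smul_apply,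
    SchwartzMap.smulLeftCLM_apply_apply hgrowth, enorm_le_iff_norm_le, norm_mul, norm_smul,
    norm_smul, ← mul_assoc, norm_eq_abs, real_inner_comm]
  gcongr
  refine (norm_fourierChar_sub_one_le _).trans_eq ?_
  simp [abs_of_pos pi_pos]

lemma lintegral_enorm_mul_increment_sq_le (v : V) {a b : 𝓢(V, ℂ)} {B : ℝ≥0∞}
    (hB : ∀ x, ‖b x‖ₑ ≤ B) {R : ℝ} (hR : 0 < R) :
    ∫⁻ x, ‖a x‖ₑ ^ 2 * ‖b (x + v) - b x‖ₑ ^ 2 ≤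
      8 * B ^ 2 * (∫⁻ ξ in {ξ | R ≤ ‖ξ‖}, ‖𝓕 a ξ‖ₑ ^ 2) +
        2 * (∫⁻ ξ in Metric.ball 0 (2 * R), ‖𝓕 a ξ‖ₑ) ^ 2 * ∫⁻ x, ‖b (x + v) - b x‖ₑ ^ 2 := by
  obtain ⟨l, hl, hal⟩ := exists_lowFreq a hR
  set M := ∫⁻ ξ in Metric.ball 0 (2 * R), ‖𝓕 a ξ‖ₑ
  have hosc (x : V) : ‖b (x + v) - b x‖ₑ ^ 2 ≤ 4 * B ^ 2 := by
    calc ‖b (x + v) - b x‖ₑ ^ 2 ≤ (B + B) ^ 2 := by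
          gcongr
          exact enorm_sub_le.trans (add_le_add (hB _) (hB _))
      _ = 4 * B ^ 2 := by ring
  have hsplit (x : V) : ‖a x‖ₑ ^ 2 ≤ 2 * (‖a x - l x‖ₑ ^ 2 + ‖l x‖ₑ ^ 2) := by
    simpa using enorm_add_sq_le (a x - l x) (l x)
  have hpoint (x : V) : ‖a x‖ₑ ^ 2 * ‖b (x + v) - b x‖ₑ ^ 2 ≤
      8 * B ^ 2 * ‖a x - l x‖ₑ ^ 2 + 2 * M ^ 2 * ‖b (x + v) - b x‖ₑ ^ 2 := by
    calc ‖a x‖ₑ ^ 2 * ‖b (x + v) - b x‖ₑ ^ 2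
        ≤ 2 * (‖a x - l x‖ₑ ^ 2 + ‖l x‖ₑ ^ 2) * ‖b (x + v) - b x‖ₑ ^ 2 := by
          gcongr
          exact hsplit x
      _ = 2 * ‖a x - l x‖ₑ ^ 2 * ‖b (x + v) - b x‖ₑ ^ 2 +
            2 * ‖l x‖ₑ ^ 2 * ‖b (x + v) - b x‖ₑ ^ 2 := by ring
      _ ≤ 2 * ‖a x - l x‖ₑ ^ 2 * (4 * B ^ 2) + 2 * M ^ 2 * ‖b (x + v) - b x‖ₑ ^ 2 := by
          gcongr
          exacts [hosc x, hl x]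
      _ = 8 * B ^ 2 * ‖a x - l x‖ₑ ^ 2 + 2 * M ^ 2 * ‖b (x + v) - b x‖ₑ ^ 2 := by ring
  refine (lintegral_mono hpoint).trans ?_
  rw [lintegral_add_left (by fun_prop), lintegral_const_mul _ (by fun_prop),
    lintegral_const_mul _ (by fun_prop)]
  gcongr

lemma lintegral_enorm_mul_increment_sq_mul_incrWeight_le (s : ℝ) (e : V) {a b : 𝓢(V, ℂ)}
    {B : ℝ≥0∞} (hB : ∀ x, ‖b x‖ₑ ≤ B) {t : ℝ} (ht : 0 < t) :
    (∫⁻ x, ‖a x‖ₑ ^ 2 * ‖b (x + t • e) - b x‖ₑ ^ 2) * incrWeight s t ≤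
      8 * B ^ 2 * ((∫⁻ ξ in {ξ | t⁻¹ ≤ ‖ξ‖}, ‖𝓕 a ξ‖ₑ ^ 2) * incrWeight s t) +
        2 * (∫⁻ x, ‖fderiv ℝ b x e‖ₑ ^ 2) * (ENNReal.ofReal (t ^ (2 - 1 - 2 * s)) *
          (∫⁻ ξ in Metric.ball 0 (2 / t), ‖𝓕 a ξ‖ₑ) ^ 2) := by
  have hincr : ∫⁻ x, ‖b (x + t • e) - b x‖ₑ ^ 2 ≤
      ENNReal.ofReal (t ^ (2 : ℝ)) * ∫⁻ x, ‖fderiv ℝ b x e‖ₑ ^ 2 := by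
    refine (lintegral_enorm_increment_sq_le (t • e) b).trans_eq ?_
    rw [← lintegral_const_mul' _ _ ENNReal.ofReal_ne_top]
    refine lintegral_congr fun x ↦ ?_
    rw [map_smul, enorm_smul, mul_pow, rpow_two, ENNReal.ofReal_pow ht.le, enorm_of_nonneg ht.le]
  have hweight : ENNReal.ofReal (t ^ (2 : ℝ)) * incrWeight s t =
      ENNReal.ofReal (t ^ (2 - 1 - 2 * s)) := by
    rw [incrWeight, ofReal_rpow_mul_ofReal_rpow ht]
    ring_nf
  refine (mul_le_mul_left
    ((lintegral_enorm_mul_increment_sq_le _ hB (inv_pos.2 ht)).trans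
      (add_le_add_right (mul_le_mul_right hincr _) _)) _).trans_eq ?_
  rw [← hweight, div_eq_mul_inv]
  ring

-- The high frequencies `t⁻¹ ≤ |ξ|` of `a` see `‖b‖_∞`, the low ones see `‖∂ₑ b‖_{L²}`.
lemma remainderEnergy_le (hV : Module.finrank ℝ V = 2) {s β : ℝ} (hs : 0 < s) (hsβ : 2 * s < β)
    (hβ : β < 2) (e : V) (a : 𝓢(V, ℂ)) {b : 𝓢(V, ℂ)} {B : ℝ≥0∞} (hB : ∀ x, ‖b x‖ₑ ≤ B) :
    remainderEnergy s e a b ≤ (8 * ENNReal.ofReal (2 * s)⁻¹ * B ^ 2 +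
      2 * (ballRpowConst V (-β) * ENNReal.ofReal (2 ^ (2 - 2 * s) / (β - 2 * s))) *
        ∫⁻ x, ‖fderiv ℝ b x e‖ₑ ^ 2) * sobolevEnergy s a := by
  have : Nontrivial V := Module.nontrivial_of_finrank_pos (R := ℝ) (by simp [hV])
  set N := ∫⁻ x, ‖fderiv ℝ b x e‖ₑ ^ 2
  have hlow := lintegral_rpow_mul_sq_lintegral_ball_le (V := V) (F := fun ξ ↦ ‖𝓕 a ξ‖ₑ)
    (ρ := 2) (by fun_prop) hsβ (by simpa [hV]) two_pos
  rw [hV, Nat.cast_two] at hlow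
  have hhigh := lintegral_highFreq_mul_incrWeight (V := V) (F := fun ξ ↦ ‖𝓕 a ξ‖ₑ ^ 2)
    (by fun_prop) hs
  have hmeas_high : Measurable fun t : ℝ ↦
      (∫⁻ ξ in {ξ | t⁻¹ ≤ ‖ξ‖}, ‖𝓕 a ξ‖ₑ ^ 2) * incrWeight s t :=
    (measurable_setLIntegral (r := fun t ξ ↦ t⁻¹ ≤ ‖ξ‖) (by fun_prop)
      (measurableSet_le (by fun_prop) (by fun_prop))).mul (by fun_prop)
  have hmeas_low : Measurable fun t : ℝ ↦ ENNReal.ofReal (t ^ (2 - 1 - 2 * s)) *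
      (∫⁻ ξ in {ξ | ‖ξ‖ < 2 / t}, ‖𝓕 a ξ‖ₑ) ^ 2 :=
    Measurable.mul (by fun_prop) ((measurable_setLIntegral (r := fun t ξ ↦ ‖ξ‖ < 2 / t)
      (by fun_prop) (measurableSet_lt (by fun_prop) (by fun_prop))).pow_const 2)
  simp_rw [← ball_zero_eq] at hmeas_low
  refine (setLIntegral_mono' measurableSet_Ioi fun t ht ↦
    lintegral_enorm_mul_increment_sq_mul_incrWeight_le s e hB ht).trans ?_
  rw [lintegral_add_left (hmeas_high.const_mul _), lintegral_const_mul _ hmeas_high, hhigh,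
    lintegral_const_mul _ hmeas_low]
  refine (add_le_add_right (mul_le_mul_right hlow _) _).trans_eq ?_
  simp_rw [sobolevEnergy]
  ring

lemma exists_remainderEnergy_le (hV : Module.finrank ℝ V = 2) {s : ℝ} (hs0 : 0 < s) (hs1 : s < 1) :
    ∃ C : ℝ≥0, ∀ (a b : 𝓢(V, ℂ)) (e : V) (B : ℝ≥0∞), (∀ x, ‖b x‖ₑ ≤ B) →
      remainderEnergy s e a b ≤
        C * (B ^ 2 + ∫⁻ x, ‖fderiv ℝ b x e‖ₑ ^ 2) * sobolevEnergy s a := by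
  have : Nontrivial V := Module.nontrivial_of_finrank_pos (R := ℝ) (by simp [hV])
  set β := 1 + s
  set c₁ := 8 * ENNReal.ofReal (2 * s)⁻¹
  set c₂ := 2 * (ballRpowConst V (-β) * ENNReal.ofReal (2 ^ (2 - 2 * s) / (β - 2 * s)))
  have hc₂ : c₂ ≠ ⊤ := by
    finiteness [ballRpowConst_ne_top (V := V) (α := -β) (by rw [hV]; push_cast; linarith)]
  have hc : c₁ + c₂ ≠ ⊤ := ENNReal.add_ne_top.2 ⟨by finiteness, hc₂⟩
  refine ⟨(c₁ + c₂).toNNReal, fun a b e B hB ↦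
    (remainderEnergy_le hV hs0 (β := β) (by linarith) (by linarith) e a hB).trans ?_⟩
  rw [ENNReal.coe_toNNReal hc, mul_add (c₁ + c₂)]
  gcongr
  exacts [le_self_add, le_add_self]

end HorizontalRemainder

section SobolevEmbedding

lemma volume_lt_norm_le (f : 𝓢(V, ℂ)) {R ℓ : ℝ} (hR : 0 < R) (hℓ : 0 < ℓ)
    (h : ∫⁻ ξ in Metric.ball 0 (2 * R), ‖𝓕 f ξ‖ₑ ≤ ENNReal.ofReal (ℓ / 2)) :
    volume {x | ℓ < ‖f x‖} ≤
      ENNReal.ofReal (4 * ℓ ^ (-2 : ℝ)) * ∫⁻ ξ in {ξ | R ≤ ‖ξ‖}, ‖𝓕 f ξ‖ₑ ^ 2 := by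
  obtain ⟨g, hg, hfg⟩ := exists_lowFreq f hR
  have hsub : {x | ℓ < ‖f x‖} ⊆ {x | ENNReal.ofReal ((ℓ / 2) ^ 2) ≤ ‖f x - g x‖ₑ ^ 2} := by
    intro x (hx : ℓ < ‖f x‖)
    have hgx : ‖g x‖ ≤ ℓ / 2 := by
      rw [← ENNReal.ofReal_le_ofReal_iff (by positivity), ofReal_norm]
      exact (hg x).trans h
    have hdiff : ℓ / 2 ≤ ‖f x - g x‖ := by linarith [norm_sub_norm_le (f x) (g x)]
    rw [mem_ofPred_eq, ← ofReal_norm, ← ENNReal.ofReal_pow (norm_nonneg _)]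
    gcongr
  have hconst : ENNReal.ofReal (4 * ℓ ^ (-2 : ℝ)) = (ENNReal.ofReal ((ℓ / 2) ^ 2))⁻¹ := by
    rw [← ENNReal.ofReal_inv_of_pos (by positivity), rpow_neg hℓ.le, rpow_two, div_pow]
    congr 1
    field_simp
    norm_num
  rw [hconst, mul_comm, ← div_eq_mul_inv]
  refine (measure_mono hsub).trans ?_
  refine (meas_ge_le_lintegral_div (by fun_prop) (by positivity) ENNReal.ofReal_ne_top).trans ?_
  gcongr

lemma volume_lt_norm_le_of_sobolevEnergy_le [Nontrivial V] {s A ℓ : ℝ}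
    (hs : 2 * s < Module.finrank ℝ V) (hA : 0 < A) (hℓ : 0 < ℓ) {f : 𝓢(V, ℂ)}
    (hf : 4 * (ballRpowConst V (-(2 * s)) * sobolevEnergy s f) ≤ ENNReal.ofReal A) :
    volume {x | ℓ < ‖f x‖} ≤ ENNReal.ofReal (4 * ℓ ^ (-2 : ℝ)) *
      ∫⁻ ξ in {ξ | ℓ ^ 2 ≤ A * (2 * ‖ξ‖) ^ (Module.finrank ℝ V - 2 * s)}, ‖𝓕 f ξ‖ₑ ^ 2 := by
  set θ := Module.finrank ℝ V - 2 * s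
  have hθ : 0 < θ := sub_pos.2 hs
  set R := (ℓ ^ 2 / A) ^ θ⁻¹ / 2
  have hR : 0 < R := by positivity
  have hRθ : A * (2 * R) ^ θ = ℓ ^ 2 := by
    rw [mul_div_cancel₀ _ two_ne_zero, rpow_inv_rpow (by positivity) hθ.ne']
    field_simp
  have hlow : (∫⁻ ξ in Metric.ball 0 (2 * R), ‖𝓕 f ξ‖ₑ) ^ 2 ≤ ENNReal.ofReal (ℓ / 2) ^ 2 := by
    calc (∫⁻ ξ in Metric.ball 0 (2 * R), ‖𝓕 f ξ‖ₑ) ^ 2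
        ≤ ballRpowConst V (-(2 * s)) * ENNReal.ofReal ((2 * R) ^ θ) * sobolevEnergy s f :=
          (sq_lintegral_ball_le (by fun_prop) (2 * s) (by positivity)).trans
            (mul_le_mul_right (setLIntegral_le_lintegral _ _) _)
      _ = 4⁻¹ * (4 * (ballRpowConst V (-(2 * s)) * sobolevEnergy s f)) *
            ENNReal.ofReal ((2 * R) ^ θ) := by
          rw [← mul_assoc 4⁻¹, ENNReal.inv_mul_cancel (by simp) (by simp), one_mul]
          ring
      _ ≤ 4⁻¹ * ENNReal.ofReal A * ENNReal.ofReal ((2 * R) ^ θ) := by gcongr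
      _ = ENNReal.ofReal (ℓ / 2) ^ 2 := by
          rw [mul_assoc, ← ENNReal.ofReal_mul hA.le, hRθ, ← ENNReal.ofReal_pow (by positivity),
            ← ENNReal.ofReal_ofNat, ← ENNReal.ofReal_inv_of_pos (by norm_num),
            ← ENNReal.ofReal_mul (by norm_num)]
          ring_nf
  refine (volume_lt_norm_le f hR hℓ ((ENNReal.pow_le_pow_left_iff two_ne_zero).1 hlow)).trans ?_
  refine mul_le_mul_right (lintegral_mono_set fun ξ (hξ : R ≤ ‖ξ‖) ↦ ?_) _
  rw [mem_ofPred_eq, ← hRθ]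
  gcongr

lemma lintegral_rpow_sq_le {q X : ℝ} (hq : 0 < q) (hX : 0 ≤ X) :
    ∫⁻ ℓ in {ℓ | ℓ ^ 2 ≤ X}, ENNReal.ofReal (ℓ ^ (q - 1)) ∂volume.restrict (Ioi 0) ≤
      ENNReal.ofReal (X ^ (q / 2) / q) := by
  have hsub : {ℓ | ℓ ^ 2 ≤ X} ∩ Ioi 0 ⊆ Ioc 0 √X := fun ℓ hℓ ↦
    ⟨hℓ.2, le_sqrt_of_sq_le hℓ.1⟩
  rw [Measure.restrict_restrict (measurableSet_le (by fun_prop) (by fun_prop))]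
  refine (lintegral_mono_set hsub).trans_eq ?_
  rw [lintegral_rpow_Ioc (by linarith) (sqrt_nonneg X), sub_add_cancel, sqrt_eq_rpow,
    ← rpow_mul hX]
  ring_nf

lemma lintegral_rpow_sq_le_mul_rpow {A q θ r : ℝ} (hA : 0 ≤ A) (hq : 0 < q) (hr : 0 ≤ r) :
    ∫⁻ ℓ in {ℓ | ℓ ^ 2 ≤ A * (2 * r) ^ θ}, ENNReal.ofReal (ℓ ^ (q - 1)) ∂volume.restrict (Ioi 0) ≤
      ENNReal.ofReal (A ^ (q / 2) * 2 ^ (θ * (q / 2)) / q) *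
        ENNReal.ofReal (r ^ (θ * (q / 2))) := by
  refine (lintegral_rpow_sq_le hq (by positivity)).trans_eq ?_
  rw [← ENNReal.ofReal_mul (by positivity), mul_rpow hA (by positivity),
    ← rpow_mul (by positivity), mul_rpow zero_le_two hr]
  ring_nf

-- Layer-cake formula; at height `ℓ` the function is split at the frequency `R` for which the low
-- frequency part is at most `ℓ / 2`.
lemma lintegral_enorm_rpow_le_of_sobolevEnergy_le [Nontrivial V] {s p A : ℝ} (hp : 2 < p)
    (hsp : (Module.finrank ℝ V - 2 * s) * (p / 2 - 1) = 2 * s) (hs : 2 * s < Module.finrank ℝ V)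
    (hA : 0 < A) {f : 𝓢(V, ℂ)}
    (hf : 4 * (ballRpowConst V (-(2 * s)) * sobolevEnergy s f) ≤ ENNReal.ofReal A) :
    ∫⁻ x, ‖f x‖ₑ ^ p ≤
      ENNReal.ofReal (4 * p * 2 ^ (2 * s) / (p - 2) * A ^ (p / 2 - 1)) * sobolevEnergy s f := by
  set θ := Module.finrank ℝ V - 2 * s
  have hp2 : 0 < p - 2 := sub_pos.2 hp
  set K := ENNReal.ofReal (A ^ (p / 2 - 1) * 2 ^ (2 * s) / (p - 2)) with hK
  have hlevel : ∀ ℓ ∈ Ioi (0 : ℝ),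
      volume {x | ℓ < ‖f x‖} * ENNReal.ofReal (ℓ ^ (p - 1)) ≤
        ENNReal.ofReal 4 * (ENNReal.ofReal (ℓ ^ (p - 2 - 1)) *
          ∫⁻ ξ in {ξ | ℓ ^ 2 ≤ A * (2 * ‖ξ‖) ^ θ}, ‖𝓕 f ξ‖ₑ ^ 2) := by
    intro ℓ (hℓ : 0 < ℓ)
    refine (mul_le_mul_left (volume_lt_norm_le_of_sobolevEnergy_le hs hA hℓ hf) _).trans_eq ?_
    rw [ENNReal.ofReal_mul zero_le_four, mul_right_comm, mul_assoc (ENNReal.ofReal 4),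
      ofReal_rpow_mul_ofReal_rpow hℓ, mul_assoc, show -2 + (p - 1) = p - 2 - 1 by ring]
  have hfreq (ξ : V) : ‖𝓕 f ξ‖ₑ ^ 2 * ∫⁻ ℓ in {ℓ | ℓ ^ 2 ≤ A * (2 * ‖ξ‖) ^ θ},
      ENNReal.ofReal (ℓ ^ (p - 2 - 1)) ∂volume.restrict (Ioi 0) ≤
        K * (ENNReal.ofReal (‖ξ‖ ^ (2 * s)) * ‖𝓕 f ξ‖ₑ ^ 2) := by
    rw [hK, ← hsp, show p / 2 - 1 = (p - 2) / 2 by ring, ← mul_assoc, mul_comm]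
    exact mul_le_mul_left (lintegral_rpow_sq_le_mul_rpow hA.le hp2 (norm_nonneg ξ)) _
  calc ∫⁻ x, ‖f x‖ₑ ^ p = ∫⁻ x, ENNReal.ofReal (‖f x‖ ^ p) := by
        simp_rw [← ENNReal.ofReal_rpow_of_nonneg (norm_nonneg _) (by linarith : 0 ≤ p), ofReal_norm]
    _ ≤ ENNReal.ofReal p * (ENNReal.ofReal 4 * ∫⁻ ξ, ‖𝓕 f ξ‖ₑ ^ 2 *
          ∫⁻ ℓ in {ℓ | ℓ ^ 2 ≤ A * (2 * ‖ξ‖) ^ θ}, ENNReal.ofReal (ℓ ^ (p - 2 - 1))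
            ∂volume.restrict (Ioi 0)) := by
        rw [lintegral_rpow_eq_lintegral_meas_lt_mul volume (by filter_upwards with x; positivity)
          (by fun_prop) (by linarith), ← lintegral_mul_setLIntegral_swap
          (r := fun ℓ ξ ↦ ℓ ^ 2 ≤ A * (2 * ‖ξ‖) ^ θ) (by fun_prop) (by fun_prop)
          (measurableSet_le (by fun_prop) (by fun_prop)),
          ← lintegral_const_mul' (ENNReal.ofReal 4) _ ENNReal.ofReal_ne_top]
        exact mul_le_mul_right (setLIntegral_mono' measurableSet_Ioi hlevel) _
    _ ≤ ENNReal.ofReal p * (ENNReal.ofReal 4 * (K * sobolevEnergy s f)) := by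
        rw [sobolevEnergy, ← lintegral_const_mul' K _ ENNReal.ofReal_ne_top]
        exact mul_le_mul_right (mul_le_mul_right (lintegral_mono hfreq) _) _
    _ = ENNReal.ofReal (4 * p * 2 ^ (2 * s) / (p - 2) * A ^ (p / 2 - 1)) *
          sobolevEnergy s f := by
        rw [hK, ← mul_assoc, ← mul_assoc, ← ENNReal.ofReal_mul (by linarith),
          ← ENNReal.ofReal_mul (by linarith)]
        ring_nf

lemma exists_lintegral_enorm_rpow_le [Nontrivial V] {s p : ℝ} (hs0 : 0 < s)
    (hs : 2 * s < Module.finrank ℝ V) (hp : p⁻¹ = 2⁻¹ - s / Module.finrank ℝ V) :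
    ∃ C : ℝ≥0, ∀ f : 𝓢(V, ℂ), ∫⁻ x, ‖f x‖ₑ ^ p ≤ C * sobolevEnergy s f ^ (p / 2) := by
  set n : ℝ := (Module.finrank ℝ V : ℝ)
  have hn : 0 < n := by linarith
  have hθ : 0 < n - 2 * s := sub_pos.2 hs
  obtain rfl : p = 2 * n / (n - 2 * s) := by
    rw [← inv_inj, hp]
    field_simp
  set p := 2 * n / (n - 2 * s)
  have hp2 : 2 < p := by rw [lt_div_iff₀ hθ]; linarith
  have hsp : (n - 2 * s) * (p / 2 - 1) = 2 * s := by simp only [p]; field_simp; ring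
  set c := 4 * (ballRpowConst V (-(2 * s)) + 1)
  have hc : c ≠ ⊤ := by finiteness [ballRpowConst_ne_top (V := V) (neg_lt_neg hs)]
  set K := ENNReal.ofReal (4 * p * 2 ^ (2 * s) / (p - 2))
  have hK : K * c ^ (p / 2 - 1) ≠ ⊤ := by finiteness
  refine ⟨(K * c ^ (p / 2 - 1)).toNNReal, fun f ↦ ?_⟩
  set H := sobolevEnergy s f
  have hHc : 4 * (ballRpowConst V (-(2 * s)) * H) ≤ c * H := by
    rw [← mul_assoc]
    exact mul_le_mul_left (mul_le_mul_right le_self_add 4) H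
  rcases eq_or_ne H 0 with hH | hH
  · have hbound := lintegral_enorm_rpow_le_of_sobolevEnergy_le hp2 hsp hs one_pos (f := f)
      (by simp [show sobolevEnergy s f = 0 from hH])
    exact hbound.trans (by simp [show sobolevEnergy s f = 0 from hH])
  · have hcH : c * H ≠ ⊤ := ENNReal.mul_ne_top hc (sobolevEnergy_ne_top hs0.le f)
    have hA : 0 < (c * H).toReal := ENNReal.toReal_pos (by simp [c, hH]) hcH
    refine (lintegral_enorm_rpow_le_of_sobolevEnergy_le hp2 hsp hs hA
      (hHc.trans_eq (ENNReal.ofReal_toReal hcH).symm)).trans_eq ?_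
    rw [ENNReal.ofReal_mul (by positivity), ← ENNReal.ofReal_rpow_of_pos hA,
      ENNReal.ofReal_toReal hcH, ENNReal.mul_rpow_of_nonneg _ _ (by linarith),
      ENNReal.coe_toNNReal hK, ← mul_assoc K, mul_assoc (K * c ^ (p / 2 - 1))]
    congr 1
    calc H ^ (p / 2 - 1) * H = H ^ (p / 2 - 1 + 1) := by
          rw [ENNReal.rpow_add _ _ hH (sobolevEnergy_ne_top hs0.le f), ENNReal.rpow_one]
      _ = H ^ (p / 2) := by rw [sub_add_cancel]

lemma exists_lintegral_enorm_sq_mul_enorm_sq_le (hV : Module.finrank ℝ V = 2) :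
    ∃ C : ℝ≥0, ∀ f g : 𝓢(V, ℂ), ∫⁻ x, ‖f x‖ₑ ^ 2 * ‖g x‖ₑ ^ 2 ≤
      C * (sobolevEnergy (1 / 2) f * sobolevEnergy (1 / 2) g) := by
  have : Nontrivial V := Module.nontrivial_of_finrank_pos (R := ℝ) (by simp [hV])
  obtain ⟨C, hC⟩ := exists_lintegral_enorm_rpow_le (V := V) (s := 1 / 2) (p := 4) (by norm_num)
    (by norm_num [hV]) (by norm_num [hV])
  refine ⟨C, fun f g ↦ (ENNReal.pow_le_pow_left_iff two_ne_zero).1 ?_⟩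
  have hL4 (f : 𝓢(V, ℂ)) :
      ∫⁻ x, (‖f x‖ₑ ^ 2) ^ 2 ≤ C * sobolevEnergy (1 / 2) f ^ 2 := by
    convert hC f using 2
    · ext x
      rw [← pow_mul, ← ENNReal.rpow_natCast]
      norm_num
    · rw [← ENNReal.rpow_natCast]
      norm_num
  calc (∫⁻ x, ‖f x‖ₑ ^ 2 * ‖g x‖ₑ ^ 2) ^ 2
      ≤ (∫⁻ x, (‖f x‖ₑ ^ 2) ^ 2) * ∫⁻ x, (‖g x‖ₑ ^ 2) ^ 2 :=
        sq_lintegral_mul_le _ (by fun_prop) (by fun_prop)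
    _ ≤ (C * sobolevEnergy (1 / 2) f ^ 2) * (C * sobolevEnergy (1 / 2) g ^ 2) :=
        mul_le_mul' (hL4 f) (hL4 g)
    _ = (C * (sobolevEnergy (1 / 2) f * sobolevEnergy (1 / 2) g)) ^ 2 := by ring

end SobolevEmbedding

end SobolevEnergy

section Slices

open scoped LineDeriv

/-- The isometric embedding `x_h ↦ (x_h, 0)` of the horizontal plane. -/
def horizEmb : E 2 →ₗᵢ[ℝ] E 3 where
  toFun xh := emb xh 0
  map_add' x y := by ext i; fin_cases i <;> simp [emb]
  map_smul' c x := by ext i; fin_cases i <;> simp [emb]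
  norm_map' x := by simp [EuclideanSpace.norm_eq, Fin.sum_univ_two, Fin.sum_univ_three, emb]

/-- The vertical unit vector. -/
abbrev vertUnit : E 3 := EuclideanSpace.single 2 1

lemma emb_eq_add (xh : E 2) (z : ℝ) : emb xh z = horizEmb xh + z • vertUnit := by
  ext i; fin_cases i <;> simp [emb, horizEmb]

lemma emb_add_left (xh v : E 2) (z : ℝ) : emb (xh + v) z = emb xh z + horizEmb v := by
  rw [emb_eq_add, emb_eq_add, map_add, add_right_comm]

lemma emb_add_right (xh : E 2) (z t : ℝ) : emb xh (z + t) = emb xh z + t • vertUnit := by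
  rw [emb_eq_add, emb_eq_add, add_smul, add_assoc]

lemma horizEmb_single (j : Fin 2) :
    horizEmb (EuclideanSpace.single j 1) = EuclideanSpace.single j.castSucc 1 := by
  ext i; fin_cases i <;> fin_cases j <;> simp [horizEmb, emb]

lemma isometry_emb (z : ℝ) : Isometry fun xh ↦ emb xh z := by
  simp_rw [emb_eq_add]
  exact (isometry_add_right _).comp horizEmb.isometry

lemma norm_le_norm_emb (xh : E 2) (z : ℝ) : ‖xh‖ ≤ ‖emb xh z‖ := by
  simp only [EuclideanSpace.norm_eq, Fin.sum_univ_two, Fin.sum_univ_three]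
  exact sqrt_le_sqrt (le_add_of_nonneg_right (sq_nonneg _))

@[fun_prop]
lemma continuous_emb {X : Type*} [TopologicalSpace X] {u : X → E 2} {z : X → ℝ}
    (hu : Continuous u) (hz : Continuous z) : Continuous fun p ↦ emb (u p) (z p) := by
  simp_rw [emb_eq_add]
  exact (horizEmb.continuous.comp hu).add (hz.smul continuous_const)

lemma measurePreserving_emb : MeasurePreserving fun p : ℝ × E 2 ↦ emb p.2 p.1 := by
  have hsnoc := (volume_preserving_piFinSuccAbove (fun _ : Fin 3 ↦ ℝ) (Fin.last 2)).symm
  have hprod : MeasurePreserving (Prod.map id WithLp.ofLp : ℝ × E 2 → ℝ × (Fin 2 → ℝ)) :=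
    (MeasurePreserving.id (volume : Measure ℝ)).prod (PiLp.volume_preserving_ofLp (Fin 2))
  convert (PiLp.volume_preserving_toLp (Fin 3)).comp (hsnoc.comp hprod) using 1
  ext p i
  fin_cases i <;> rfl

lemma lintegral_eq_lintegral_emb {G : E 3 → ℝ≥0∞} (hG : Measurable G) :
    ∫⁻ x, G x = ∫⁻ z, ∫⁻ xh, G (emb xh z) := by
  rw [← measurePreserving_emb.lintegral_comp hG, Measure.volume_eq_prod, lintegral_prod]
  exact (hG.comp measurePreserving_emb.measurable).aemeasurable

/-- The restriction `f(·, z)` of `f` to the horizontal plane at height `z`. -/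
def slice (f : 𝓢(E 3, ℂ)) (z : ℝ) : 𝓢(E 2, ℂ) :=
  SchwartzMap.compCLMOfAntilipschitz ℂ (g := fun xh ↦ emb xh z)
    (by
      simp_rw [emb_eq_add]
      exact horizEmb.toContinuousLinearMap.hasTemperateGrowth.add (.const _))
    (isometry_emb z).antilipschitz f

@[simp]
lemma slice_apply (f : 𝓢(E 3, ℂ)) (z : ℝ) (xh : E 2) : slice f z xh = f (emb xh z) := rfl

lemma fderiv_slice (f : 𝓢(E 3, ℂ)) (z : ℝ) (xh e : E 2) :
    fderiv ℝ (slice f z) xh e = (∂_{horizEmb e} f) (emb xh z) := by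
  rw [SchwartzMap.lineDerivOp_apply_eq_fderiv, ← (slice f z).differentiableAt.lineDeriv_eq_fderiv,
    ← f.differentiableAt.lineDeriv_eq_fderiv, lineDeriv, lineDeriv]
  simp_rw [slice_apply, emb_add_left, map_smul]

lemma exists_norm_emb_le (f : 𝓢(E 3, ℂ)) :
    ∃ C, ∀ xh z, ‖f (emb xh z)‖ ≤ C * (1 + ‖xh‖) ^ (-3 : ℝ) := by
  refine ⟨2 ^ 3 * ((Finset.Iic (3, 0)).sup fun m ↦ SchwartzMap.seminorm ℝ m.1 m.2) f,
    fun xh z ↦ ?_⟩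
  have hdecay := f.one_add_le_sup_seminorm_apply (𝕜 := ℝ) (m := (3, 0)) le_rfl le_rfl (emb xh z)
  rw [norm_iteratedFDeriv_zero] at hdecay
  rw [rpow_neg (by positivity), rpow_ofNat, ← div_eq_mul_inv, le_div_iff₀' (by positivity)]
  refine le_trans ?_ hdecay
  gcongr
  exact norm_le_norm_emb xh z

lemma exists_lintegral_enorm_slice_sq_le (f : 𝓢(E 3, ℂ)) :
    ∃ K : ℝ≥0, ∀ z, ∫⁻ xh, ‖slice f z xh‖ₑ ^ 2 ≤ K := by
  obtain ⟨C, hC⟩ := exists_norm_emb_le f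
  have hint : Integrable fun xh : E 2 ↦ C ^ 2 * (1 + ‖xh‖) ^ (-3 : ℝ) :=
    (integrable_one_add_norm (by norm_num)).const_mul _
  refine ⟨(∫⁻ xh : E 2, ENNReal.ofReal (C ^ 2 * (1 + ‖xh‖) ^ (-3 : ℝ))).toNNReal, fun z ↦ ?_⟩
  rw [ENNReal.coe_toNNReal hint.lintegral_lt_top.ne]
  refine lintegral_mono fun xh ↦ ?_
  rw [slice_apply, ← ofReal_norm, ← ENNReal.ofReal_pow (norm_nonneg _)]
  refine ENNReal.ofReal_le_ofReal ((pow_le_pow_left₀ (norm_nonneg _) (hC xh z) 2).trans ?_)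
  rw [mul_pow]
  gcongr
  refine pow_le_of_le_one (by positivity) (rpow_le_one_of_one_le_of_nonpos ?_ (by norm_num))
    two_ne_zero
  exact le_add_of_nonneg_right (norm_nonneg _)

lemma hasDerivAt_emb (f : 𝓢(E 3, ℂ)) (xh : E 2) (z : ℝ) :
    HasDerivAt (fun z ↦ f (emb xh z)) ((∂_{vertUnit} f) (emb xh z)) z := by
  rw [SchwartzMap.lineDerivOp_apply_eq_fderiv]
  refine f.differentiableAt.hasFDerivAt.comp_hasDerivAt z ?_
  rw [show emb xh = fun z ↦ horizEmb xh + z • vertUnit from funext (emb_eq_add xh)]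
  simpa using ((hasDerivAt_id z).smul_const vertUnit).const_add (horizEmb xh)

lemma fourier_slice_apply (f : 𝓢(E 3, ℂ)) (z : ℝ) (ξ : E 2) :
    𝓕 (slice f z) ξ = ∫ xh, 𝐞 (-inner ℝ xh ξ) • f (emb xh z) := by
  rw [SchwartzMap.fourier_coe, fourier_eq]
  rfl

lemma hasDerivAt_fourier_slice (f : 𝓢(E 3, ℂ)) (ξ : E 2) (z : ℝ) :
    HasDerivAt (fun z ↦ 𝓕 (slice f z) ξ) (𝓕 (slice (∂_{vertUnit} f) z) ξ) z := by
  obtain ⟨C, hC⟩ := exists_norm_emb_le (∂_{vertUnit} f)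
  have hint : Integrable fun xh : E 2 ↦ C * (1 + ‖xh‖) ^ (-3 : ℝ) :=
    (integrable_one_add_norm (by norm_num)).const_mul C
  have hbound (xh : E 2) (z : ℝ) :
      ‖𝐞 (-inner ℝ xh ξ) • (∂_{vertUnit} f) (emb xh z)‖ ≤ C * (1 + ‖xh‖) ^ (-3 : ℝ) := by
    rw [Circle.norm_smul]
    exact hC xh z
  have hderiv (xh : E 2) (z : ℝ) : HasDerivAt (fun z ↦ 𝐞 (-inner ℝ xh ξ) • f (emb xh z))
      (𝐞 (-inner ℝ xh ξ) • (∂_{vertUnit} f) (emb xh z)) z :=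
    (hasDerivAt_emb f xh z).const_smul (𝐞 (-inner ℝ xh ξ) : ℂ)
  simp_rw [fourier_slice_apply]
  exact (hasDerivAt_integral_of_dominated_loc_of_deriv_le univ_mem
    (.of_forall fun z ↦ Continuous.aestronglyMeasurable (by fun_prop))
    ((fourierIntegral_convergent_iff ξ).2 (slice f z).integrable)
    (Continuous.aestronglyMeasurable (by fun_prop)) (.of_forall fun xh z _ ↦ hbound xh z) hint
    (.of_forall fun xh z _ ↦ hderiv xh z)).2

@[fun_prop]
lemma measurable_fourier_slice (f : 𝓢(E 3, ℂ)) :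
    Measurable fun p : ℝ × E 2 ↦ 𝓕 (slice f p.1) p.2 := by
  simp_rw [fourier_slice_apply]
  refine StronglyMeasurable.measurable (StronglyMeasurable.integral_prod_right
    (f := fun (p : ℝ × E 2) xh ↦ 𝐞 (-inner ℝ xh p.2) • f (emb xh p.1)) ?_)
  exact Continuous.stronglyMeasurable (by fun_prop)

end Slices

section SlicedEnergies

open scoped LineDeriv

variable {s : ℝ}

lemma measurable_lintegral_emb_mul_incrWeight {G : ℝ → E 3 → ℝ≥0∞} (hG : Measurable G.uncurry) :
    Measurable fun p : ℝ × ℝ ↦ (∫⁻ xh, G p.2 (emb xh p.1)) * incrWeight s p.2 :=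
  Measurable.mul (Measurable.lintegral_prod_right'
    (f := fun q : (ℝ × ℝ) × E 2 ↦ G q.1.2 (emb q.2 q.1.1))
    (hG.comp (Continuous.measurable (by fun_prop) :
      Measurable fun q : (ℝ × ℝ) × E 2 ↦ (q.1.2, emb q.2 q.1.1)))) (by fun_prop)

lemma lintegral_lintegral_mul_incrWeight_eq {G : ℝ → E 3 → ℝ≥0∞} (hG : Measurable G.uncurry) :
    ∫⁻ t in Ioi 0, (∫⁻ x, G t x) * incrWeight s t =
      ∫⁻ z, ∫⁻ t in Ioi 0, (∫⁻ xh, G t (emb xh z)) * incrWeight s t := by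
  rw [lintegral_lintegral_swap]
  · refine lintegral_congr fun t ↦ ?_
    rw [lintegral_mul_const' _ _ (incrWeight_ne_top s t),
      lintegral_eq_lintegral_emb (by exact hG.comp measurable_prodMk_left)]
  · exact (measurable_lintegral_emb_mul_incrWeight hG).aemeasurable

lemma incrEnergy_horizEmb (s : ℝ) (e : E 2) (f : 𝓢(E 3, ℂ)) :
    incrEnergy s (horizEmb e) f = ∫⁻ z, incrEnergy s e (slice f z) := by
  rw [incrEnergy, lintegral_lintegral_mul_incrWeight_eq (by fun_prop)]
  simp only [incrEnergy, slice_apply, emb_add_left, map_smul]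

lemma measurable_incrEnergy_slice (s : ℝ) (e : E 2) (f : 𝓢(E 3, ℂ)) :
    Measurable fun z ↦ incrEnergy s e (slice f z) := by
  simp only [incrEnergy, slice_apply, emb_add_left, map_smul]
  exact (measurable_lintegral_emb_mul_incrWeight
    (G := fun t x ↦ ‖f (x + t • horizEmb e) - f x‖ₑ ^ 2) (by fun_prop)).lintegral_prod_right'

lemma lintegral_sobolevEnergy_slice_le (hs0 : 0 < s) (hs1 : s < 1) (f : 𝓢(E 3, ℂ)) :
    ∫⁻ z, sobolevEnergy s (slice f z) ≤ 2 * sobolevEnergy s f := by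
  have hκ := charIncrConst_ne_top hs0 hs1
  refine (ENNReal.mul_le_mul_iff_right (charIncrConst_ne_zero s) hκ).1 ?_
  let basis := EuclideanSpace.basisFun (Fin 2) ℝ
  calc charIncrConst s * ∫⁻ z, sobolevEnergy s (slice f z)
      = ∫⁻ z, charIncrConst s * sobolevEnergy s (slice f z) := (lintegral_const_mul' _ _ hκ).symm
    _ ≤ ∫⁻ z, ∑ j, incrEnergy s (basis j) (slice f z) :=
        lintegral_mono fun z ↦ charIncrConst_mul_sobolevEnergy_le basis hs0 hs1 (slice f z)
    _ = ∑ j, incrEnergy s (horizEmb (basis j)) f := by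
        simp_rw [incrEnergy_horizEmb]
        exact lintegral_finsetSum _ fun j _ ↦ measurable_incrEnergy_slice s (basis j) f
    _ ≤ ∑ _ : Fin 2, charIncrConst s * sobolevEnergy s f :=
        Finset.sum_le_sum fun j _ ↦ incrEnergy_le hs0 hs1 (by simp) f
    _ = charIncrConst s * (2 * sobolevEnergy s f) := by
        rw [Fin.sum_univ_two]
        ring

lemma measurable_sobolevEnergy_slice (s : ℝ) (f : 𝓢(E 3, ℂ)) :
    Measurable fun z ↦ sobolevEnergy s (slice f z) :=
  Measurable.lintegral_prod_right'
    (f := fun p : ℝ × E 2 ↦ ENNReal.ofReal (‖p.2‖ ^ (2 * s)) * ‖𝓕 (slice f p.1) p.2‖ₑ ^ 2)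
    (by fun_prop)

lemma remainderEnergy_horizEmb (s : ℝ) (e : E 2) (a b : 𝓢(E 3, ℂ)) :
    remainderEnergy s (horizEmb e) a b = ∫⁻ z, remainderEnergy s e (slice a z) (slice b z) := by
  rw [remainderEnergy, lintegral_lintegral_mul_incrWeight_eq (by fun_prop)]
  simp only [remainderEnergy, slice_apply, emb_add_left, map_smul]

lemma exists_remainderEnergy_horizEmb_le (hs0 : 0 < s) (hs1 : s < 1) :
    ∃ C : ℝ≥0, ∀ (a b : 𝓢(E 3, ℂ)) (e : E 2) (B N : ℝ≥0), (∀ x, ‖b x‖ₑ ≤ B) →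
      (∀ z, ∫⁻ xh, ‖slice (∂_{horizEmb e} b) z xh‖ₑ ^ 2 ≤ N) →
      remainderEnergy s (horizEmb e) a b ≤ C * (B ^ 2 + N) * sobolevEnergy s a := by
  obtain ⟨C, hC⟩ := exists_remainderEnergy_le (V := E 2) (by simp) hs0 hs1
  refine ⟨2 * C, fun a b e B N hB hN ↦ ?_⟩
  have hslice (z : ℝ) : remainderEnergy s e (slice a z) (slice b z) ≤
      C * (B ^ 2 + N) * sobolevEnergy s (slice a z) := by
    refine (hC _ _ e B fun xh ↦ hB _).trans ?_
    simp_rw [fderiv_slice]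
    exact mul_le_mul_left (mul_le_mul_right (add_le_add_right (hN z) _) _) _
  calc remainderEnergy s (horizEmb e) a b
      = ∫⁻ z, remainderEnergy s e (slice a z) (slice b z) := remainderEnergy_horizEmb s e a b
    _ ≤ ∫⁻ z, C * (B ^ 2 + N) * sobolevEnergy s (slice a z) := lintegral_mono hslice
    _ = C * (B ^ 2 + N) * ∫⁻ z, sobolevEnergy s (slice a z) :=
        lintegral_const_mul' _ _ (by finiteness)
    _ ≤ C * (B ^ 2 + N) * (2 * sobolevEnergy s a) :=
        mul_le_mul_right (lintegral_sobolevEnergy_slice_le hs0 hs1 a) _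
    _ = ↑(2 * C) * (B ^ 2 + N) * sobolevEnergy s a := by
        push_cast
        ring

lemma lintegral_enorm_fourier_slice_sub_sq_le (b : 𝓢(E 3, ℂ)) (z : ℝ) (ξ : E 2) :
    ∫⁻ t in Ioi 0, ‖𝓕 (slice b (z + t) - slice b z) ξ‖ₑ ^ 2 * incrWeight (1 / 2) t ≤
      4 * ∫⁻ r, ‖𝓕 (slice (∂_{vertUnit} b) r) ξ‖ₑ ^ 2 := by
  have hcont : Continuous fun r ↦ 𝓕 (slice (∂_{vertUnit} b) r) ξ :=
    continuous_iff_continuousAt.2 fun r ↦ (hasDerivAt_fourier_slice _ ξ r).continuousAt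
  convert lintegral_enorm_sub_sq_le (hasDerivAt_fourier_slice b ξ) hcont z using 4 with t
  · rw [fourier_sub_apply]
  · rw [incrWeight]
    norm_num

lemma lintegral_sobolevEnergy_slice_sub_le (s : ℝ) (b : 𝓢(E 3, ℂ)) (z : ℝ) :
    ∫⁻ t in Ioi 0, sobolevEnergy s (slice b (z + t) - slice b z) * incrWeight (1 / 2) t ≤
      4 * ∫⁻ r, sobolevEnergy s (slice (∂_{vertUnit} b) r) := by
  have hmeas₁ : Measurable fun p : ℝ × E 2 ↦ ENNReal.ofReal (‖p.2‖ ^ (2 * s)) *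
      ‖𝓕 (slice b (z + p.1) - slice b z) p.2‖ₑ ^ 2 * incrWeight (1 / 2) p.1 := by
    have hshift := (measurable_fourier_slice b).comp
      (f := fun p : ℝ × E 2 ↦ (z + p.1, p.2)) (by fun_prop)
    have hfixed := (measurable_fourier_slice b).comp (f := fun p : ℝ × E 2 ↦ (z, p.2)) (by fun_prop)
    simp_rw [fourier_sub_apply]
    exact Measurable.mul (Measurable.mul (by fun_prop) ((hshift.sub hfixed).enorm.pow_const 2))
      (by fun_prop)
  have hmeas₂ : Measurable fun p : ℝ × E 2 ↦ ENNReal.ofReal (‖p.2‖ ^ (2 * s)) *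
      ‖𝓕 (slice (∂_{vertUnit} b) p.1) p.2‖ₑ ^ 2 := by
    fun_prop
  calc ∫⁻ t in Ioi 0, sobolevEnergy s (slice b (z + t) - slice b z) * incrWeight (1 / 2) t
      = ∫⁻ ξ, ENNReal.ofReal (‖ξ‖ ^ (2 * s)) * ∫⁻ t in Ioi 0,
          ‖𝓕 (slice b (z + t) - slice b z) ξ‖ₑ ^ 2 * incrWeight (1 / 2) t := by
        simp_rw [sobolevEnergy, ← lintegral_mul_const' _ _ (incrWeight_ne_top _ _),
          ← lintegral_const_mul' _ _ ENNReal.ofReal_ne_top, ← mul_assoc]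
        exact lintegral_lintegral_swap hmeas₁.aemeasurable
    _ ≤ ∫⁻ ξ, ENNReal.ofReal (‖ξ‖ ^ (2 * s)) * (4 * ∫⁻ r, ‖𝓕 (slice (∂_{vertUnit} b) r) ξ‖ₑ ^ 2) :=
        lintegral_mono fun ξ ↦
          mul_le_mul_right (lintegral_enorm_fourier_slice_sub_sq_le b z ξ) _
    _ = 4 * ∫⁻ r, sobolevEnergy s (slice (∂_{vertUnit} b) r) := by
        simp_rw [mul_left_comm _ (4 : ℝ≥0∞), sobolevEnergy]
        rw [lintegral_const_mul' _ _ (by simp), lintegral_lintegral_swap hmeas₂.aemeasurable]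
        simp_rw [← lintegral_const_mul' _ _ ENNReal.ofReal_ne_top]

lemma exists_lintegral_slice_mul_increment_le :
    ∃ C : ℝ≥0, ∀ (a b : 𝓢(E 3, ℂ)) (z : ℝ),
      ∫⁻ t in Ioi 0, (∫⁻ xh, ‖a (emb xh z)‖ₑ ^ 2 *
        ‖b (emb xh z + t • vertUnit) - b (emb xh z)‖ₑ ^ 2) * incrWeight (1 / 2) t ≤
        C * (∫⁻ r, sobolevEnergy (1 / 2) (slice (∂_{vertUnit} b) r)) *
          sobolevEnergy (1 / 2) (slice a z) := by
  obtain ⟨C, hC⟩ := exists_lintegral_enorm_sq_mul_enorm_sq_le (V := E 2) (by simp)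
  refine ⟨4 * C, fun a b z ↦ ?_⟩
  set P := ∫⁻ r, sobolevEnergy (1 / 2) (slice (∂_{vertUnit} b) r)
  set A := sobolevEnergy (1 / 2) (slice a z)
  have hA : A ≠ ⊤ := sobolevEnergy_ne_top one_half_pos.le _
  simp_rw [← emb_add_right]
  calc ∫⁻ t in Ioi 0, (∫⁻ xh, ‖a (emb xh z)‖ₑ ^ 2 *
        ‖b (emb xh (z + t)) - b (emb xh z)‖ₑ ^ 2) * incrWeight (1 / 2) t
      ≤ ∫⁻ t in Ioi 0, C * A * (sobolevEnergy (1 / 2) (slice b (z + t) - slice b z) *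
          incrWeight (1 / 2) t) := by
        refine lintegral_mono fun t ↦ ?_
        rw [← mul_assoc, mul_assoc (C : ℝ≥0∞)]
        exact mul_le_mul_left (hC (slice a z) (slice b (z + t) - slice b z)) _
    _ ≤ C * A * (4 * P) := by
        rw [lintegral_const_mul' _ _ (by finiteness)]
        exact mul_le_mul_right (lintegral_sobolevEnergy_slice_sub_le _ b z) _
    _ = ↑(4 * C) * P * A := by
        push_cast
        ring

lemma exists_remainderEnergy_vertUnit_le :
    ∃ C : ℝ≥0, ∀ a b : 𝓢(E 3, ℂ), remainderEnergy (1 / 2) vertUnit a b ≤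
      C * (∫⁻ r, sobolevEnergy (1 / 2) (slice (∂_{vertUnit} b) r)) * sobolevEnergy (1 / 2) a := by
  obtain ⟨C, hC⟩ := exists_lintegral_slice_mul_increment_le
  refine ⟨2 * C, fun a b ↦ ?_⟩
  set P := ∫⁻ r, sobolevEnergy (1 / 2) (slice (∂_{vertUnit} b) r)
  have hP : P ≠ ⊤ := ne_top_of_le_ne_top
    (by finiteness [sobolevEnergy_ne_top one_half_pos.le (∂_{vertUnit} b)])
    (lintegral_sobolevEnergy_slice_le one_half_pos one_half_lt_one _)
  rw [remainderEnergy, lintegral_lintegral_mul_incrWeight_eq (by fun_prop)]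
  calc _ ≤ ∫⁻ z, C * P * sobolevEnergy (1 / 2) (slice a z) := lintegral_mono (hC a b)
    _ = C * P * ∫⁻ z, sobolevEnergy (1 / 2) (slice a z) :=
        lintegral_const_mul' _ _ (by finiteness)
    _ ≤ C * P * (2 * sobolevEnergy (1 / 2) a) :=
        mul_le_mul_right (lintegral_sobolevEnergy_slice_le one_half_pos one_half_lt_one a) _
    _ = ↑(2 * C) * P * sobolevEnergy (1 / 2) a := by
        push_cast
        ring

end SlicedEnergies

section Products

open scoped LineDeriv

section
variable {V : Type*} [NormedAddCommGroup V] [InnerProductSpace ℝ V]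

/-- The pointwise product `x ↦ a x * b x` as a Schwartz function. -/
def pointwiseMul (a b : 𝓢(V, ℂ)) : 𝓢(V, ℂ) :=
  SchwartzMap.pairing (ContinuousLinearMap.mul ℂ ℂ) a b

@[simp]
lemma pointwiseMul_apply (a b : 𝓢(V, ℂ)) (x : V) : pointwiseMul a b x = a x * b x := rfl

variable [FiniteDimensional ℝ V] [MeasurableSpace V] [BorelSpace V]

lemma incrEnergy_pointwiseMul_le (s : ℝ) (e : V) (a b : 𝓢(V, ℂ)) {B : ℝ≥0}
    (hB : ∀ x, ‖b x‖ₑ ≤ B) :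
    incrEnergy s e (pointwiseMul a b) ≤
      2 * (B ^ 2 * incrEnergy s e a + remainderEnergy s e a b) := by
  have hpoint (x v : V) : ‖a (x + v) * b (x + v) - a x * b x‖ₑ ^ 2 ≤
      2 * (B ^ 2 * ‖a (x + v) - a x‖ₑ ^ 2 + ‖a x‖ₑ ^ 2 * ‖b (x + v) - b x‖ₑ ^ 2) := by
    rw [show a (x + v) * b (x + v) - a x * b x =
      b (x + v) * (a (x + v) - a x) + a x * (b (x + v) - b x) by ring]
    refine (enorm_add_sq_le _ _).trans ?_
    simp_rw [enorm_mul, mul_pow]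
    gcongr
    exact hB _
  have hincr (t : ℝ) : (∫⁻ x, ‖a (x + t • e) * b (x + t • e) - a x * b x‖ₑ ^ 2) * incrWeight s t ≤
      2 * (B ^ 2 * ((∫⁻ x, ‖a (x + t • e) - a x‖ₑ ^ 2) * incrWeight s t) +
        (∫⁻ x, ‖a x‖ₑ ^ 2 * ‖b (x + t • e) - b x‖ₑ ^ 2) * incrWeight s t) := by
    rw [← mul_assoc (_ ^ 2), ← add_mul, ← mul_assoc]
    gcongr
    rw [← lintegral_const_mul' _ _ (by finiteness), ← lintegral_add_left (by fun_prop),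
      ← lintegral_const_mul' _ _ (by finiteness)]
    exact lintegral_mono fun x ↦ hpoint x (t • e)
  have hmeas : Measurable fun t : ℝ ↦
      (B : ℝ≥0∞) ^ 2 * ((∫⁻ x, ‖a (x + t • e) - a x‖ₑ ^ 2) * incrWeight s t) := by
    have := Measurable.lintegral_prod_right' (ν := (volume : Measure V))
      (f := fun p : ℝ × V ↦ ‖a (p.2 + p.1 • e) - a p.2‖ₑ ^ 2) (by fun_prop)
    fun_prop
  simp_rw [incrEnergy, remainderEnergy, pointwiseMul_apply]
  rw [← lintegral_const_mul' _ _ (by finiteness), ← lintegral_add_left hmeas,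
    ← lintegral_const_mul' _ _ (by finiteness)]
  exact lintegral_mono hincr

end

lemma exists_remainderEnergy_single_le :
    ∃ C : ℝ≥0, ∀ (a b : 𝓢(E 3, ℂ)) (B N : ℝ≥0), (∀ x, ‖b x‖ₑ ≤ B) →
      (∀ (j : Fin 2) z,
        ∫⁻ xh, ‖slice (∂_{horizEmb (EuclideanSpace.single j 1)} b) z xh‖ₑ ^ 2 ≤ N) →
      ∀ i : Fin 3, remainderEnergy (1 / 2) (EuclideanSpace.single i 1) a b ≤
        C * (B ^ 2 + N + ∫⁻ z, sobolevEnergy (1 / 2) (slice (∂_{vertUnit} b) z)) *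
          sobolevEnergy (1 / 2) a := by
  obtain ⟨C₁, hC₁⟩ := exists_remainderEnergy_horizEmb_le one_half_pos one_half_lt_one
  obtain ⟨C₂, hC₂⟩ := exists_remainderEnergy_vertUnit_le
  refine ⟨C₁ + C₂, fun a b B N hB hN i ↦ ?_⟩
  rw [ENNReal.coe_add]
  cases i using Fin.lastCases with
  | last => exact (hC₂ a b).trans (mul_le_mul_left (mul_le_mul' le_add_self le_add_self) _)
  | cast j =>
    rw [← horizEmb_single]
    exact (hC₁ a b _ B N hB (hN j)).trans
      (mul_le_mul_left (mul_le_mul' le_self_add le_self_add) _)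

lemma exists_sobolevEnergy_pointwiseMul_le :
    ∃ C : ℝ≥0, ∀ (a b : 𝓢(E 3, ℂ)) (B N : ℝ≥0), (∀ x, ‖b x‖ₑ ≤ B) →
      (∀ (j : Fin 2) z,
        ∫⁻ xh, ‖slice (∂_{horizEmb (EuclideanSpace.single j 1)} b) z xh‖ₑ ^ 2 ≤ N) →
      sobolevEnergy (1 / 2) (pointwiseMul a b) ≤
        C * (B ^ 2 + N + ∫⁻ z, sobolevEnergy (1 / 2) (slice (∂_{vertUnit} b) z)) *
          sobolevEnergy (1 / 2) a := by
  obtain ⟨C, hC⟩ := exists_remainderEnergy_single_le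
  set κ := charIncrConst (1 / 2)
  have hκ : κ ≠ ⊤ := charIncrConst_ne_top one_half_pos one_half_lt_one
  have hκ0 : κ ≠ 0 := charIncrConst_ne_zero _
  refine ⟨(κ⁻¹ * (6 * (κ + C))).toNNReal, fun a b B N hB hN ↦ ?_⟩
  rw [ENNReal.coe_toNNReal (by finiteness)]
  set P := ∫⁻ z, sobolevEnergy (1 / 2) (slice (∂_{vertUnit} b) z)
  set A := sobolevEnergy (1 / 2) a
  let basis := EuclideanSpace.basisFun (Fin 3) ℝ
  have hincr (i : Fin 3) : incrEnergy (1 / 2) (basis i) (pointwiseMul a b) ≤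
      2 * ((κ + C) * (B ^ 2 + N + P) * A) := by
    refine (incrEnergy_pointwiseMul_le _ _ a b hB).trans ?_
    gcongr
    calc B ^ 2 * incrEnergy (1 / 2) (basis i) a + remainderEnergy (1 / 2) (basis i) a b
        ≤ (B ^ 2 + N + P) * (κ * A) + C * (B ^ 2 + N + P) * A := by
          refine add_le_add (mul_le_mul' (le_add_right le_self_add) ?_) ?_
          · exact incrEnergy_le one_half_pos one_half_lt_one (by simp [basis]) a
          · simpa only [basis, EuclideanSpace.basisFun_apply] using hC a b B N hB hN i
      _ = (κ + C) * (B ^ 2 + N + P) * A := by ring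
  refine (ENNReal.mul_le_mul_iff_right hκ0 hκ).1 ?_
  calc κ * sobolevEnergy (1 / 2) (pointwiseMul a b)
      ≤ ∑ i, incrEnergy (1 / 2) (basis i) (pointwiseMul a b) :=
        charIncrConst_mul_sobolevEnergy_le basis one_half_pos one_half_lt_one _
    _ ≤ ∑ _ : Fin 3, 2 * ((κ + C) * (B ^ 2 + N + P) * A) := Finset.sum_le_sum fun i _ ↦ hincr i
    _ = κ * κ⁻¹ * (6 * (κ + C)) * (B ^ 2 + N + P) * A := by
        rw [ENNReal.mul_inv_cancel hκ0 hκ, Fin.sum_univ_three]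
        ring
    _ = κ * (κ⁻¹ * (6 * (κ + C)) * (B ^ 2 + N + P) * A) := by ring

end Products

section Norms

open scoped LineDeriv

lemma rpow_one_half_sq {x : ℝ} (hx : 0 ≤ x) : (x ^ (1 / 2 : ℝ)) ^ 2 = x := by
  rw [← sqrt_eq_rpow, sq_sqrt hx]

variable {d : ℕ} {s : ℝ}

lemma hNorm_nonneg (f : E d → ℂ) : 0 ≤ hNorm d s f := by
  unfold hNorm
  positivity

lemma ofReal_hNorm_sq (hs : 0 ≤ s) (f : 𝓢(E d, ℂ)) :
    ENNReal.ofReal (hNorm d s f ^ 2) = sobolevEnergy s f := by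
  have hfourier (ξ : E d) : ENNReal.ofReal (‖ξ‖ ^ (2 * s) * ‖𝓕 f ξ‖ ^ 2) =
      ENNReal.ofReal (‖ξ‖ ^ (2 * s)) * ‖𝓕 f ξ‖ₑ ^ 2 := by
    rw [ENNReal.ofReal_mul (by positivity), ENNReal.ofReal_pow (norm_nonneg _), ofReal_norm]
  rw [hNorm, rpow_one_half_sq (by positivity), ← SchwartzMap.fourier_coe,
    integral_eq_lintegral_of_nonneg_ae (.of_forall fun ξ ↦ by positivity)
      (Measurable.aestronglyMeasurable (by fun_prop))]
  simp_rw [hfourier]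
  exact ENNReal.ofReal_toReal (sobolevEnergy_ne_top hs f)

lemma lintegral_sobolevEnergy_slice_eq (hs0 : 0 < s) (hs1 : s < 1) (f : 𝓢(E 3, ℂ)) :
    ∫⁻ z, sobolevEnergy s (slice f z) = ENNReal.ofReal (∫ z, hNorm 2 s (slice f z) ^ 2) := by
  have hfin : ∫⁻ z, sobolevEnergy s (slice f z) ≠ ⊤ := ne_top_of_le_ne_top
    (by finiteness [sobolevEnergy_ne_top hs0.le f]) (lintegral_sobolevEnergy_slice_le hs0 hs1 f)
  have hnorm (z : ℝ) : hNorm 2 s (slice f z) ^ 2 = (sobolevEnergy s (slice f z)).toReal := by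
    rw [← ofReal_hNorm_sq hs0.le, ENNReal.toReal_ofReal (sq_nonneg _)]
  simp_rw [hnorm]
  rw [integral_toReal (measurable_sobolevEnergy_slice s f).aemeasurable
    (.of_forall fun z ↦ (sobolevEnergy_ne_top hs0.le _).lt_top), ENNReal.ofReal_toReal hfin]

lemma enorm_le_ofReal_iSup_norm (b : 𝓢(E 3, ℂ)) (x : E 3) :
    ‖b x‖ₑ ≤ ENNReal.ofReal (⨆ x, ‖b x‖) := by
  obtain ⟨M, hM⟩ := b.decay 0 0
  rw [← ofReal_norm]
  refine ENNReal.ofReal_le_ofReal (le_ciSup (f := fun x ↦ ‖b x‖) ⟨M, ?_⟩ x)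
  rintro _ ⟨y, rfl⟩
  simpa using hM.2 y

/-- The squared norm `‖∇_h b(·, z)‖²_{L²_h}` of the horizontal gradient at height `z`. -/
def horizGradSq (b : E 3 → ℂ) (z : ℝ) : ℝ :=
  ∫ xh : E 2, (‖fderiv ℝ b (emb xh z) (EuclideanSpace.single 0 1)‖ ^ 2
    + ‖fderiv ℝ b (emb xh z) (EuclideanSpace.single 1 1)‖ ^ 2)

lemma horizGradSq_nonneg (b : E 3 → ℂ) (z : ℝ) : 0 ≤ horizGradSq b z := by
  unfold horizGradSq
  positivity

lemma ofReal_horizGradSq (b : 𝓢(E 3, ℂ)) (z : ℝ) :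
    ENNReal.ofReal (horizGradSq b z) = ∑ j : Fin 2,
      ∫⁻ xh, ‖slice (∂_{horizEmb (EuclideanSpace.single j 1)} b) z xh‖ₑ ^ 2 := by
  have hint (f : 𝓢(E 2, ℂ)) : Integrable fun xh ↦ ‖f xh‖ ^ 2 :=
    (f.memLp 2 volume).integrable_norm_pow two_ne_zero
  simp_rw [lintegral_enorm_sq_eq]
  rw [← ENNReal.ofReal_sum_of_nonneg fun j _ ↦ by positivity,
    ← integral_finsetSum _ fun j _ ↦ hint _]
  simp only [slice_apply, SchwartzMap.lineDerivOp_apply_eq_fderiv, horizEmb_single,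
    Fin.sum_univ_two]
  rfl

lemma bddAbove_horizGradSq (b : 𝓢(E 3, ℂ)) : BddAbove (range (horizGradSq b)) := by
  choose K hK using fun j : Fin 2 ↦
    exists_lintegral_enorm_slice_sq_le (∂_{horizEmb (EuclideanSpace.single j 1)} b)
  refine ⟨∑ j, (K j : ℝ), ?_⟩
  rintro _ ⟨z, rfl⟩
  rw [← ENNReal.ofReal_le_ofReal_iff (by positivity), ofReal_horizGradSq,
    ENNReal.ofReal_sum_of_nonneg fun j _ ↦ by positivity]
  exact Finset.sum_le_sum fun j _ ↦ by simpa using hK j z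

lemma lintegral_enorm_slice_horizDeriv_sq_le (b : 𝓢(E 3, ℂ)) (j : Fin 2) (z : ℝ) :
    ∫⁻ xh, ‖slice (∂_{horizEmb (EuclideanSpace.single j 1)} b) z xh‖ₑ ^ 2 ≤
      ENNReal.ofReal ((⨆ z, horizGradSq b z ^ (1 / 2 : ℝ)) ^ 2) := by
  have hbdd : BddAbove (range fun z ↦ horizGradSq b z ^ (1 / 2 : ℝ)) := by
    obtain ⟨K, hK⟩ := bddAbove_horizGradSq b
    refine ⟨K ^ (1 / 2 : ℝ), ?_⟩
    rintro _ ⟨z, rfl⟩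
    exact rpow_le_rpow (horizGradSq_nonneg b z) (hK ⟨z, rfl⟩) one_half_pos.le
  calc ∫⁻ xh, ‖slice (∂_{horizEmb (EuclideanSpace.single j 1)} b) z xh‖ₑ ^ 2
      ≤ ENNReal.ofReal (horizGradSq b z) := by
        rw [ofReal_horizGradSq]
        exact Finset.single_le_sum
          (f := fun j ↦ ∫⁻ xh, ‖slice (∂_{horizEmb (EuclideanSpace.single j 1)} b) z xh‖ₑ ^ 2)
          (fun _ _ ↦ zero_le) (Finset.mem_univ j)
    _ ≤ ENNReal.ofReal ((⨆ z, horizGradSq b z ^ (1 / 2 : ℝ)) ^ 2) := by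
        rw [← rpow_one_half_sq (horizGradSq_nonneg b z)]
        have := rpow_nonneg (horizGradSq_nonneg b z) (1 / 2)
        gcongr
        exact le_ciSup hbdd z

lemma exists_hNorm_mul_sq_le :
    ∃ C : ℝ≥0, ∀ a b : 𝓢(E 3, ℂ), hNorm 3 (1 / 2) (fun x ↦ a x * b x) ^ 2 ≤
      C * ((⨆ x, ‖b x‖) ^ 2 + (⨆ z, horizGradSq b z ^ (1 / 2 : ℝ)) ^ 2 +
        ∫ z, hNorm 2 (1 / 2) (slice (∂_{vertUnit} b) z) ^ 2) * hNorm 3 (1 / 2) a ^ 2 := by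
  obtain ⟨C, hC⟩ := exists_sobolevEnergy_pointwiseMul_le
  refine ⟨C, fun a b ↦ ?_⟩
  set S := ⨆ x, ‖b x‖
  set M := ⨆ z, horizGradSq b z ^ (1 / 2 : ℝ)
  have hS : 0 ≤ S := iSup_nonneg fun x ↦ norm_nonneg _
  have hP : 0 ≤ ∫ z, hNorm 2 (1 / 2) (slice (∂_{vertUnit} b) z) ^ 2 := by positivity
  rw [← ENNReal.ofReal_le_ofReal_iff (by positivity), ENNReal.ofReal_mul (by positivity),
    ENNReal.ofReal_mul C.coe_nonneg, ENNReal.ofReal_add (by positivity) hP,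
    ENNReal.ofReal_add (by positivity) (by positivity), ENNReal.ofReal_pow hS,
    ENNReal.ofReal_coe_nnreal, ofReal_hNorm_sq one_half_pos.le,
    ← lintegral_sobolevEnergy_slice_eq one_half_pos one_half_lt_one]
  exact (ofReal_hNorm_sq one_half_pos.le (pointwiseMul a b)).trans_le
    (hC a b S.toNNReal (M ^ 2).toNNReal (enorm_le_ofReal_iSup_norm b)
      (lintegral_enorm_slice_horizDeriv_sq_le b))

lemma le_of_sq_le_mul_sq {C x y m u v : ℝ} (hC : 0 ≤ C) (hy : 0 ≤ y) (hm : 0 ≤ m) (hu : 0 ≤ u)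
    (hv : 0 ≤ v) (h : x ^ 2 ≤ C * (u ^ 2 + m ^ 2 + v ^ 2) * y ^ 2) :
    x ≤ (√C + 1) * y * (m + u + v) := by
  refine le_of_sq_le_sq (h.trans ?_) (by positivity)
  have hconst : C ≤ (√C + 1) ^ 2 := by nlinarith [sq_sqrt hC, sqrt_nonneg C]
  have hsum : u ^ 2 + m ^ 2 + v ^ 2 ≤ (m + u + v) ^ 2 := by
    nlinarith [mul_nonneg hm hu, mul_nonneg hm hv, mul_nonneg hu hv]
  calc C * (u ^ 2 + m ^ 2 + v ^ 2) * y ^ 2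
      ≤ (√C + 1) ^ 2 * (m + u + v) ^ 2 * y ^ 2 := by gcongr
    _ = ((√C + 1) * y * (m + u + v)) ^ 2 := by ring

end Norms

end AnisotropicProduct

open AnisotropicProduct in
open scoped SchwartzMap LineDeriv in
theorem product_aniso_half_general :
    ∃ C > (0 : ℝ), ∀ a b : 𝓢(E 3, ℂ),
      hNorm 3 (1/2) (fun x => a x * b x) ≤
        C * hNorm 3 (1/2) a *
          ((⨆ x₃ : ℝ, (∫ xh : E 2,
              (‖fderiv ℝ b (emb xh x₃) (EuclideanSpace.single 0 1)‖ ^ 2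
               + ‖fderiv ℝ b (emb xh x₃) (EuclideanSpace.single 1 1)‖ ^ 2)) ^ (1/2 : ℝ))
            + (⨆ x : E 3, ‖b x‖)
            + (∫ x₃ : ℝ,
                (hNorm 2 (1/2) (fun xh : E 2 =>
                  fderiv ℝ b (emb xh x₃) (EuclideanSpace.single 2 1))) ^ 2) ^ (1/2 : ℝ)) := by
  obtain ⟨C, hC⟩ := exists_hNorm_mul_sq_le
  refine ⟨√C + 1, by positivity, fun a b ↦ ?_⟩
  have hT : 0 ≤ ∫ z, hNorm 2 (1 / 2) (slice (∂_{vertUnit} b) z) ^ 2 := by positivity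
  have hsq := hC a b
  rw [← rpow_one_half_sq hT] at hsq
  exact le_of_sq_le_mul_sq C.coe_nonneg (hNorm_nonneg a)
    (iSup_nonneg fun z ↦ rpow_nonneg (horizGradSq_nonneg b z) _)
    (iSup_nonneg fun x ↦ norm_nonneg _) (rpow_nonneg hT _) hsq

/-- `‖ab‖_{Ḣ^{1/2}(ℝ³)} ≤ C ‖a‖_{Ḣ^{1/2}} (‖∇_h b‖_{L^∞_v L²_h} + ‖b‖_{L^∞}
+ ‖∂₃ b‖_{L²_v Ḣ^{1/2}_h})` for smooth compactly supported `a, b`. -/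
theorem product_aniso_half :
    ∃ C > (0:ℝ), ∀ a b : E 3 → ℂ,
      ContDiff ℝ (⊤ : ℕ∞) a → HasCompactSupport a → ContDiff ℝ (⊤ : ℕ∞) b → HasCompactSupport b →
      hNorm 3 (1/2) (fun x => a x * b x) ≤
        C * hNorm 3 (1/2) a *
          ((⨆ x₃ : ℝ, (∫ xh : E 2,
              (‖fderiv ℝ b (emb xh x₃) (EuclideanSpace.single 0 1)‖ ^ 2
               + ‖fderiv ℝ b (emb xh x₃) (EuclideanSpace.single 1 1)‖ ^ 2)) ^ (1/2 : ℝ))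
            + (⨆ x : E 3, ‖b x‖)
            + (∫ x₃ : ℝ,
                (hNorm 2 (1/2) (fun xh : E 2 =>
                  fderiv ℝ b (emb xh x₃) (EuclideanSpace.single 2 1))) ^ 2) ^ (1/2 : ℝ)) := by
  obtain ⟨C, hC, h⟩ := product_aniso_half_general
  exact ⟨C, hC, fun a b ha ha' hb hb' ↦ h (ha'.toSchwartzMap ha) (hb'.toSchwartzMap hb)⟩
end
end
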